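/- arXiv:2504.05949 — 3 statements merged into one kernel-verified Lean document; each statement's English description precedes it below -/
import Mathlib

section
/- Let n ≥ 1, 1 < p < ∞ and 0 < s < 1. There exists a constant C = C(n,p) > 0, depending only on n and p, such that for every f ∈ C_c^∞(ℍⁿ₊), (C/(s(1−s))) · ∫_{ℍⁿ₊} |f(ξ)|^p / x₁^{sp} dξ ≤ ∫_{ℍⁿ} ∫_{ℍⁿ} |f(ξ)−f(ξ')|^p / d(ξ⁻¹∘ξ')^{Q+sp} dξ' dξ. -/
/-!
The Gagliardo energy is written in coordinates adapted to each point `ξ` of the half-space: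
`ξ' = ξ ∘ δ_a e` with `a = x₁(ξ)`, where `δ_a` is the group dilation. Left translations preserve
Lebesgue measure, `dξ' = a^Q de`, and `d(ξ⁻¹ ∘ ξ') = a d(e)`, so the energy is at least the average
over `e`, against `d(e)^(-Q-sp)`, of
`D(e) = ∫_{ℍⁿ₊} |f(ξ) - f(ξ ∘ δ_{x₁(ξ)} e)|^p / x₁^{sp} dξ` (`lintegral_shiftEnergy_le`).

For a fixed `e` the map `T ξ = ξ ∘ δ_{x₁(ξ)} e` multiplies `x₁` by `τ = 1 + x₁(e)` and, when `τ > 0`,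
has Jacobian `τ`. With `I = ∫_{ℍⁿ₊} |f|^p / x₁^{sp}` there are two bounds.

* If `x₁(e) ≤ -1`, then `T ξ` lies outside the half-space, `f (T ξ) = 0`, and `D(e) ≥ I`.
* If `-1 < x₁(e) < 0` and `sp > 1`, then the weighted `L^p` norm of `f ∘ T` is `τ^{(sp-1)/p} I^{1/p}`,
  and Minkowski's inequality gives `D(e) ≥ (1 - τ^{(sp-1)/p})^p I`. This uses `I < ∞`, which holds
  because `f` has compact support in the open half-space.

On the cone where all coordinates of `e` are controlled by `u = -x₁(e)`, the gauge is comparable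
to `u`, and integrating out the other coordinates leaves the one-dimensional kernel `u^{-1-sp}`
(`hardy_of_shift_bound`). The first bound contributes `∫_1^∞ u^{-1-sp} du = 1/(sp)`, which suffices
for `s` away from `1`. For `s` near `1` the exponent `(sp-1)/p` is bounded below by some `b > 0`,
`1 - (1-u)^{(sp-1)/p} ≥ b u` by Bernoulli, and the second bound contributes
`b^p ∫_0^1 u^{p-1-sp} du = b^p / (p(1-s))`.
-/

open MeasureTheory Real Filter Topology ENNReal

noncomputable section

/-- The Heisenberg group `ℍⁿ` as `ℝⁿ × ℝⁿ × ℝ`. -/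
abbrev Heis (n : ℕ) : Type := (Fin n → ℝ) × (Fin n → ℝ) × ℝ

/-- Group law `ξ ∘ ξ' = (x+x', y+y', t+t'+2⟨y,x'⟩−2⟨x,y'⟩)`. -/
def Hmul {n : ℕ} (a b : Heis n) : Heis n :=
  (a.1 + b.1, a.2.1 + b.2.1,
    a.2.2 + b.2.2 + 2 * (∑ i, a.2.1 i * b.1 i) - 2 * (∑ i, a.1 i * b.2.1 i))

/-- Group inverse `ξ⁻¹ = −ξ`. -/
def Hinv {n : ℕ} (a : Heis n) : Heis n := (-a.1, -a.2.1, -a.2.2)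

/-- Squared Euclidean norm of the horizontal part `z = (x,y) ∈ ℝ^{2n}`. -/
def zsq {n : ℕ} (a : Heis n) : ℝ := (∑ i, (a.1 i) ^ 2) + (∑ i, (a.2.1 i) ^ 2)

/-- Euclidean norm `|z|` of the horizontal part. -/
def znorm {n : ℕ} (a : Heis n) : ℝ := Real.sqrt (zsq a)

/-- The Koranyi–Folland gauge `d(ξ) = (|z|⁴ + t²)^{1/4}`. -/
def hd {n : ℕ} (a : Heis n) : ℝ := ((zsq a) ^ 2 + (a.2.2) ^ 2) ^ ((1 : ℝ) / 4)

/-- Homogeneous dimension `Q = 2n + 2` (as a real number). -/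
def hQ (n : ℕ) : ℝ := 2 * n + 2

/-- First coordinate `x₁` of a point of `ℍⁿ`. -/
def x1 {n : ℕ} (a : Heis n) : ℝ := if h : 0 < n then a.1 ⟨0, h⟩ else 0

/-- The half-space `ℍⁿ₊ = {ξ : x₁ > 0}`. -/
def halfSpace (n : ℕ) : Set (Heis n) := {a | 0 < x1 a}

/-- Euclidean distance `|z - z'|` of the horizontal parts. -/
def zdist {n : ℕ} (a b : Heis n) : ℝ := znorm (Hmul (Hinv a) b)

/-- `J_p(t) = |t|^{p-2} t`. -/
def Jp (p t : ℝ) : ℝ := |t| ^ (p - 2) * t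

/-- The Gagliardo-type seminorm (to the `p`-th power)
`[f]_{s,p,α,Ω}^p = ∫_Ω ∫_Ω |f(ξ)-f(ξ')|^p / (d(ξ⁻¹∘ξ')^{Q+sp} |z-z'|^α)`. -/
def gagSem {n : ℕ} (p s α : ℝ) (Ω : Set (Heis n)) (f : Heis n → ℝ) : ℝ≥0∞ :=
  ∫⁻ ξ in Ω, ∫⁻ ξ' in Ω, ENNReal.ofReal
    (|f ξ - f ξ'| ^ p / (hd (Hmul (Hinv ξ) ξ') ^ (hQ n + s * p) * zdist ξ ξ' ^ α))

/-- The seminorm for `α = 0` (no horizontal weight). -/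
def gagSem0 {n : ℕ} (p s : ℝ) (Ω : Set (Heis n)) (f : Heis n → ℝ) : ℝ≥0∞ :=
  ∫⁻ ξ in Ω, ∫⁻ ξ' in Ω, ENNReal.ofReal
    (|f ξ - f ξ'| ^ p / hd (Hmul (Hinv ξ) ξ') ^ (hQ n + s * p))

/-- The strip `𝒟_{r,R} = {ξ : r < x₁ < R}`. -/
def strip (n : ℕ) (r R : ℝ) : Set (Heis n) := {ξ | r < x1 ξ ∧ x1 ξ < R}

/-- `f ∈ W^{s,p,α}_{loc(x₁)}(ℍⁿ₊)`. -/
def MemWlocx1 (n : ℕ) (p s α : ℝ) (f : Heis n → ℝ) : Prop :=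
  Measurable f ∧ ∀ r R : ℝ, 0 < r → r < R →
    (∫⁻ ξ in strip n r R, ENNReal.ofReal (|f ξ| ^ p)) < ⊤ ∧
    gagSem p s α (strip n r R) f < ⊤

/-- `f ∈ L^{p-1}_{sp,α}(ℍⁿ)`. -/
def MemLsp (n : ℕ) (p s α : ℝ) (f : Heis n → ℝ) : Prop :=
  Measurable f ∧
  (∀ K : Set (Heis n), IsCompact K →
    (∫⁻ ξ in K, ENNReal.ofReal (|f ξ| ^ (p - 1))) < ⊤) ∧
  (∫⁻ ξ, ENNReal.ofReal (|f ξ| ^ (p - 1) /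
      ((1 + hd ξ) ^ (hQ n + s * p) * (1 + znorm ξ) ^ α))) < ⊤

/-- `φ ∈ W^{s,p,α}(Ω)`. -/
def MemW (n : ℕ) (p s α : ℝ) (Ω : Set (Heis n)) (φ : Heis n → ℝ) : Prop :=
  Measurable φ ∧ (∫⁻ ξ in Ω, ENNReal.ofReal (|φ ξ| ^ p)) < ⊤ ∧ gagSem p s α Ω φ < ⊤

/-- `φ ∈ W^{s,p}(Ω)` (the case `α = 0`). -/
def MemW0 (n : ℕ) (p s : ℝ) (Ω : Set (Heis n)) (φ : Heis n → ℝ) : Prop :=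
  Measurable φ ∧ (∫⁻ ξ in Ω, ENNReal.ofReal (|φ ξ| ^ p)) < ⊤ ∧ gagSem0 p s Ω φ < ⊤

/-- `f ∈ W^{s,p}_{loc}(ℍⁿ₊)`. -/
def MemWloc0 (n : ℕ) (p s : ℝ) (f : Heis n → ℝ) : Prop :=
  Measurable f ∧ ∀ K : Set (Heis n), IsCompact K → K ⊆ halfSpace n →
    (∫⁻ ξ in K, ENNReal.ofReal (|f ξ| ^ p)) < ⊤ ∧ gagSem0 p s K f < ⊤

/-- `f ∈ L^{p-1}_{sp}(ℍⁿ)`. -/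
def MemLsp0 (n : ℕ) (p s : ℝ) (f : Heis n → ℝ) : Prop :=
  Measurable f ∧
  (∀ K : Set (Heis n), IsCompact K →
    (∫⁻ ξ in K, ENNReal.ofReal (|f ξ| ^ (p - 1))) < ⊤) ∧
  (∫⁻ ξ, ENNReal.ofReal (|f ξ| ^ (p - 1) / (1 + hd ξ) ^ (hQ n + s * p))) < ⊤

/-- Surface measure of the unit sphere `S^{m-1} ⊂ ℝ^m`: `|S^{m-1}| = 2π^{m/2}/Γ(m/2)`. -/
def sphereArea (m : ℕ) : ℝ := 2 * Real.pi ^ ((m : ℝ) / 2) / Real.Gamma ((m : ℝ) / 2)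

/-- `ℐ(k,θ,α) = (∫₀^∞ (1+t²)^{-(k+2+θ)/4} dt) (∫₀^∞ r^{k-2}(1+r²)^{-(k+θ+α)/2} dr)`. -/
def calI (k : ℕ) (θ α : ℝ) : ℝ :=
  (∫ t in Set.Ioi (0 : ℝ), (1 + t ^ 2) ^ (-(((k : ℝ) + 2 + θ) / 4))) *
  (∫ r in Set.Ioi (0 : ℝ), r ^ ((k : ℝ) - 2) * (1 + r ^ 2) ^ (-(((k : ℝ) + θ + α) / 2)))

/-- `Λ_{s,p,α} = 2∫₀¹ |1-τ^{(sp+α-1)/p}|^p/(1-τ)^{1+sp+α} dτ + 2/(sp+α)`. -/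
def LamC (s p α : ℝ) : ℝ :=
  2 * (∫ τ in Set.Ioo (0 : ℝ) 1,
      |1 - τ ^ ((s * p + α - 1) / p)| ^ p / (1 - τ) ^ (1 + s * p + α)) + 2 / (s * p + α)

/-- `u_β(τ) = τ^β` for `τ > 0`, extended by `0`. -/
def ubeta (β τ : ℝ) : ℝ := if 0 < τ then τ ^ β else 0

/-- `λ(β,s,p)`. -/
def lam (p s β : ℝ) : ℝ :=
  2 * (∫ τ in Set.Ioo (0 : ℝ) 1,
      Jp p (1 - τ ^ β) * (1 - τ ^ (s * p - 1 - β * (p - 1))) / (1 - τ) ^ (1 + s * p)) +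
  2 / (s * p)

/-- `λ_ε(β,s,p)`. -/
def lamEps (p s β ε : ℝ) : ℝ :=
  2 * (∫ τ in Set.Ioo (0 : ℝ) (1 / (1 + ε)), Jp p (1 - τ ^ β) / |1 - τ| ^ (1 + s * p)) +
  2 * (∫ τ in Set.Ioi (1 + ε), Jp p (1 - τ ^ β) / |1 - τ| ^ (1 + s * p)) +
  2 / (s * p)

/-- The box `D_{R₀}`. -/
def boxD (n : ℕ) (R₀ : ℝ) : Set (Heis n) :=
  {ξ | (∀ i, |ξ.1 i| ≤ R₀) ∧ (∀ i, |ξ.2.1 i| ≤ R₀) ∧ |ξ.2.2| ≤ R₀ ^ 2}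

/-- The box `D_{R₀,t}`. -/
def boxDt (n : ℕ) (R₀ : ℝ) : Set (Heis n) :=
  {ξ | (∀ i, |ξ.1 i| ≤ R₀) ∧ (∀ i, |ξ.2.1 i| ≤ R₀) ∧ |ξ.2.2| ≤ R₀ ^ 2 + R₀}

/-! ### Changes of variables on the Heisenberg group -/

theorem lintegral_comp_affine {E : Type*} [NormedAddCommGroup E] [NormedSpace ℝ E]
    [FiniteDimensional ℝ E] [MeasurableSpace E] [BorelSpace E] (μ : Measure E)
    [μ.IsAddHaarMeasure] {a : ℝ} (ha : 0 < a) (c : E) {g : E → ℝ≥0∞} (hg : Measurable g) :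
    ∫⁻ v, g (c + a • v) ∂μ = ENNReal.ofReal ((a ^ Module.finrank ℝ E)⁻¹) * ∫⁻ v, g v ∂μ := by
  have h1 : ∫⁻ v, g (c + a • v) ∂μ = ∫⁻ v, g (c + v) ∂(Measure.map (a • ·) μ) := by
    rw [lintegral_map (by fun_prop) (by fun_prop)]
  rw [h1, Measure.map_addHaar_smul μ ha.ne', lintegral_smul_measure,
    lintegral_add_left_eq_self g c, abs_of_pos (by positivity), smul_eq_mul]

@[fun_prop]
theorem measurable_Hmul {n : ℕ} {α : Type*} [MeasurableSpace α] {f g : α → Heis n}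
    (hf : Measurable f) (hg : Measurable g) : Measurable fun a => Hmul (f a) (g a) := by
  unfold Hmul
  fun_prop

/-- The anisotropic dilation `δ_a(x,y,t) = (ax, ay, a²t)` of the Heisenberg group. -/
def dil {n : ℕ} (a : ℝ) (e : Heis n) : Heis n := (a • e.1, a • e.2.1, a ^ 2 * e.2.2)

@[fun_prop]
theorem measurable_dil {n : ℕ} {α : Type*} [MeasurableSpace α] {a : α → ℝ} {g : α → Heis n}
    (hf : Measurable a) (hg : Measurable g) : Measurable fun x => dil (a x) (g x) := by
  unfold dil
  fun_prop

theorem lintegral_heis {n : ℕ} {G : Heis n → ℝ≥0∞} (hG : Measurable G) :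
    ∫⁻ e, G e = ∫⁻ x, ∫⁻ y, ∫⁻ t, G (x, y, t) := by
  rw [Measure.volume_eq_prod, lintegral_prod _ hG.aemeasurable]
  refine lintegral_congr fun x => ?_
  rw [Measure.volume_eq_prod, lintegral_prod _ (by fun_prop)]

/-- Left translations preserve Lebesgue measure and `δ_a` scales it by `a ^ Q`. -/
theorem lintegral_translate_dil {n : ℕ} (ξ : Heis n) {a : ℝ} (ha : 0 < a) {G : Heis n → ℝ≥0∞}
    (hG : Measurable G) :
    ∫⁻ e, G (Hmul ξ (dil a e)) = ENNReal.ofReal ((a ^ (2 * n + 2))⁻¹) * ∫⁻ e, G e := by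
  have hm : Measurable fun e => G (Hmul ξ (dil a e)) :=
    hG.comp (measurable_Hmul measurable_const (measurable_dil measurable_const measurable_id))
  rw [lintegral_heis hm, lintegral_heis hG]
  have ht : ∀ x y, ∫⁻ t, G (Hmul ξ (dil a (x, y, t))) =
      ENNReal.ofReal ((a ^ 2)⁻¹) * ∫⁻ t, G (ξ.1 + a • x, ξ.2.1 + a • y, t) := by
    intro x y
    have := lintegral_comp_affine volume (by positivity : 0 < a ^ 2)
      (ξ.2.2 + 2 * (∑ i, ξ.2.1 i * (a • x) i) - 2 * (∑ i, ξ.1 i * (a • y) i))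
      (g := fun t => G (ξ.1 + a • x, ξ.2.1 + a • y, t)) (by fun_prop)
    rw [Module.finrank_self, pow_one] at this
    rw [← this]
    refine lintegral_congr fun t => ?_
    simp only [Hmul, dil, smul_eq_mul]
    congr 3
    ring
  have hmy : ∀ x, Measurable fun y => ∫⁻ t, G (x, y, t) := fun x =>
    Measurable.lintegral_prod_right' (f := fun q : (Fin n → ℝ) × ℝ => G (x, q.1, q.2))
      (by fun_prop)
  have hmx : Measurable fun x => ∫⁻ y, ∫⁻ t, G (x, y, t) := by
    refine Measurable.lintegral_prod_right'
      (f := fun q : (Fin n → ℝ) × (Fin n → ℝ) => ∫⁻ t, G (q.1, q.2, t)) ?_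
    exact Measurable.lintegral_prod_right'
      (f := fun q : ((Fin n → ℝ) × (Fin n → ℝ)) × ℝ => G (q.1.1, q.1.2, q.2)) (by fun_prop)
  have hy : ∀ x, ∫⁻ y, ∫⁻ t, G (Hmul ξ (dil a (x, y, t))) =
      ENNReal.ofReal ((a ^ 2)⁻¹) * (ENNReal.ofReal ((a ^ n)⁻¹) *
        ∫⁻ y, ∫⁻ t, G (ξ.1 + a • x, y, t)) := by
    intro x
    simp_rw [ht]
    have := lintegral_comp_affine volume ha ξ.2.1 (hmy (ξ.1 + a • x))
    rw [Module.finrank_fin_fun] at this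
    rw [← this, lintegral_const_mul' _ _ ENNReal.ofReal_ne_top]
  simp_rw [hy]
  have := lintegral_comp_affine volume ha ξ.1 hmx
  rw [Module.finrank_fin_fun] at this
  rw [lintegral_const_mul' _ _ ENNReal.ofReal_ne_top,
    lintegral_const_mul' _ _ ENNReal.ofReal_ne_top, this, ← mul_assoc, ← mul_assoc,
    ← ENNReal.ofReal_mul (by positivity), ← ENNReal.ofReal_mul (by positivity)]
  congr 2
  rw [← mul_inv, ← mul_inv]
  ring

/-- The linear map `x ↦ x + x₀ w` has determinant `1 + w₀`. -/
theorem lintegral_comp_shear {m : ℕ} (w : Fin (m + 1) → ℝ) (hw : 0 < 1 + w 0)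
    {g : (Fin (m + 1) → ℝ) → ℝ≥0∞} (hg : Measurable g) :
    ∫⁻ x, g (x + x 0 • w) = ENNReal.ofReal ((1 + w 0)⁻¹) * ∫⁻ x, g x := by
  set A : Matrix (Fin (m + 1)) (Fin (m + 1)) ℝ :=
    1 + Matrix.replicateCol Unit w * Matrix.replicateRow Unit (Pi.single 0 1 : Fin (m + 1) → ℝ) with hA
  have hdet : A.det = 1 + w 0 := by
    rw [hA, Matrix.det_one_add_replicateCol_mul_replicateRow]
    simp
  have hap : ∀ x, Matrix.toLin' A x = x + x 0 • w := by
    intro x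
    ext i
    simp only [hA, Matrix.toLin'_apply, Matrix.add_mulVec, Matrix.one_mulVec,
      ← Matrix.mulVec_mulVec, Pi.add_apply]
    simp [Matrix.mulVec, dotProduct, Pi.single_apply, mul_comm]
  have := Real.map_matrix_volume_pi_eq_smul_volume_pi (M := A) (by rw [hdet]; exact hw.ne')
  calc ∫⁻ x, g (x + x 0 • w) = ∫⁻ x, g (Matrix.toLin' A x) := by simp_rw [hap]
    _ = ∫⁻ x, g x ∂(Measure.map (Matrix.toLin' A) volume) := by
        rw [lintegral_map hg (LinearMap.continuous_of_finiteDimensional _).measurable]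
    _ = _ := by
        rw [this, lintegral_smul_measure, hdet, abs_of_pos (by positivity), smul_eq_mul]

theorem x1_succ {m : ℕ} (ξ : Heis (m + 1)) : x1 ξ = ξ.1 0 := by
  simp [x1]

/-- For a fixed `e`, the map `ξ ↦ ξ ∘ δ_{x₁(ξ)} e` has constant Jacobian `1 + x₁(e)`. -/
theorem lintegral_comp_shift {m : ℕ} (e : Heis (m + 1)) (he : 0 < 1 + x1 e)
    {G : Heis (m + 1) → ℝ≥0∞} (hG : Measurable G) :
    ∫⁻ ξ, G (Hmul ξ (dil (x1 ξ) e)) = ENNReal.ofReal ((1 + x1 e)⁻¹) * ∫⁻ ξ, G ξ := by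
  rw [x1_succ] at he ⊢
  have hx1 : Measurable (x1 : Heis (m + 1) → ℝ) := by
    simp_rw [funext x1_succ]
    fun_prop
  have hm : Measurable fun ξ => G (Hmul ξ (dil (x1 ξ) e)) :=
    hG.comp (measurable_Hmul measurable_id (measurable_dil hx1 measurable_const))
  rw [lintegral_heis hm, lintegral_heis hG]
  have hmx : Measurable fun x => ∫⁻ y, ∫⁻ t, G (x, y, t) := by
    refine Measurable.lintegral_prod_right'
      (f := fun q : (Fin (m + 1) → ℝ) × (Fin (m + 1) → ℝ) => ∫⁻ t, G (q.1, q.2, t)) ?_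
    exact Measurable.lintegral_prod_right'
      (f := fun q : ((Fin (m + 1) → ℝ) × (Fin (m + 1) → ℝ)) × ℝ => G (q.1.1, q.1.2, q.2))
      (by fun_prop)
  rw [← lintegral_comp_shear e.1 he hmx]
  refine lintegral_congr fun x => ?_
  rw [← lintegral_add_right_eq_self (fun y => ∫⁻ t, G (x + x 0 • e.1, y, t)) (x 0 • e.2.1)]
  refine lintegral_congr fun y => ?_
  rw [← lintegral_add_right_eq_self (fun t => G (x + x 0 • e.1, y + x 0 • e.2.1, t))
    (x 0 ^ 2 * e.2.2 + 2 * (∑ i, y i * (x 0 • e.1) i) - 2 * (∑ i, x i * (x 0 • e.2.1) i))]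
  refine lintegral_congr fun t => ?_
  simp only [Hmul, dil, x1_succ]
  congr 3
  ring

/-! ### Hardy inequality for a single shift -/

theorem measurable_x1 {m : ℕ} : Measurable (x1 : Heis (m + 1) → ℝ) := by
  simp_rw [funext x1_succ]
  fun_prop

theorem continuous_x1 {m : ℕ} : Continuous (x1 : Heis (m + 1) → ℝ) := by
  simp_rw [funext x1_succ]
  fun_prop

theorem measurableSet_halfSpace {m : ℕ} : MeasurableSet (halfSpace (m + 1)) :=
  measurableSet_lt measurable_const measurable_x1

theorem x1_shift {m : ℕ} (ξ e : Heis (m + 1)) :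
    x1 (Hmul ξ (dil (x1 ξ) e)) = (1 + x1 e) * x1 ξ := by
  simp only [x1_succ, Hmul, dil, Pi.add_apply, Pi.smul_apply, smul_eq_mul]
  ring

/-- The weighted integral `∫_{ℍⁿ₊} |f|^p / x₁^θ`. -/
def hardyInt {n : ℕ} (p θ : ℝ) (f : Heis n → ℝ) : ℝ≥0∞ :=
  ∫⁻ ξ in halfSpace n, ENNReal.ofReal (|f ξ| ^ p / x1 ξ ^ θ)

/-- The weighted integral of the `p`-th power of the difference of `f` along the map
`ξ ↦ ξ ∘ δ_{x₁(ξ)} e`. -/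
def shiftEnergy {n : ℕ} (p θ : ℝ) (f : Heis n → ℝ) (e : Heis n) : ℝ≥0∞ :=
  ∫⁻ ξ in halfSpace n,
    ENNReal.ofReal (|f ξ - f (Hmul ξ (dil (x1 ξ) e))| ^ p / x1 ξ ^ θ)

/-- A shift by `e` with `x₁(e) ≤ -1` leaves the half-space, where `f` vanishes. -/
theorem hardyInt_le_shiftEnergy_of_le {m : ℕ} {p θ : ℝ} {f : Heis (m + 1) → ℝ}
    (hf0 : ∀ ξ, x1 ξ ≤ 0 → f ξ = 0) {e : Heis (m + 1)} (he : x1 e ≤ -1) :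
    hardyInt p θ f ≤ shiftEnergy p θ f e := by
  refine setLIntegral_mono' measurableSet_halfSpace fun ξ hξ => ?_
  have hξ' : 0 < x1 ξ := hξ
  rw [hf0 (Hmul ξ (dil (x1 ξ) e)) (by rw [x1_shift]; nlinarith), sub_zero]

/-- The Jacobian `τ = 1 + x₁(e)` and the scaling `x₁ ↦ τ x₁` of the weight give the factor
`τ^(θ-1)`. -/
theorem lintegral_shifted {m : ℕ} {p θ : ℝ} {f : Heis (m + 1) → ℝ} (hf : Measurable f)
    {e : Heis (m + 1)} (he : 0 < 1 + x1 e) :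
    ∫⁻ ξ in halfSpace (m + 1),
        ENNReal.ofReal (|f (Hmul ξ (dil (x1 ξ) e))| ^ p / x1 ξ ^ θ) =
      ENNReal.ofReal ((1 + x1 e) ^ (θ - 1)) * hardyInt p θ f := by
  set τ := 1 + x1 e with hτ
  have hx := measurable_x1 (m := m)
  have hG : Measurable ((halfSpace (m + 1)).indicator
      fun ξ => ENNReal.ofReal (|f ξ| ^ p / x1 ξ ^ θ)) :=
    Measurable.indicator (by fun_prop) measurableSet_halfSpace
  have key := lintegral_comp_shift e he hG
  rw [lintegral_indicator measurableSet_halfSpace, ← hτ] at key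
  have h2 : ∫⁻ ξ in halfSpace (m + 1),
        ENNReal.ofReal (|f (Hmul ξ (dil (x1 ξ) e))| ^ p / x1 ξ ^ θ) =
      ENNReal.ofReal (τ ^ θ) * ∫⁻ ξ, (halfSpace (m + 1)).indicator
        (fun ξ => ENNReal.ofReal (|f ξ| ^ p / x1 ξ ^ θ)) (Hmul ξ (dil (x1 ξ) e)) := by
    rw [← lintegral_indicator measurableSet_halfSpace,
      ← lintegral_const_mul' _ _ ENNReal.ofReal_ne_top]
    refine lintegral_congr fun ξ => ?_
    by_cases hξ : 0 < x1 ξ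
    · rw [Set.indicator_of_mem (show ξ ∈ halfSpace (m + 1) from hξ), Set.indicator_of_mem
        (show _ ∈ halfSpace (m + 1) from (by
          change 0 < x1 _
          rw [x1_shift]; positivity)),
        ← ENNReal.ofReal_mul (by positivity), x1_shift, ← hτ, Real.mul_rpow he.le hξ.le]
      congr 1
      have : τ ^ θ ≠ 0 := (Real.rpow_pos_of_pos he _).ne'
      have : x1 ξ ^ θ ≠ 0 := (Real.rpow_pos_of_pos hξ _).ne'
      field_simp
    · rw [Set.indicator_of_notMem (show ξ ∉ halfSpace (m + 1) from hξ), Set.indicator_of_notMem,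
        mul_zero]
      change ¬ 0 < x1 _
      rw [x1_shift, ← hτ]
      nlinarith
  rw [h2, key, ← mul_assoc, ← ENNReal.ofReal_mul (by positivity), Real.rpow_sub he,
    Real.rpow_one]
  rfl

/-- Minkowski's inequality: for `-1 < x₁(e) < 0` and `θ > 1` the shift by `e` contracts the weighted
`L^p` norm by the factor `(1 + x₁(e))^((θ-1)/p) < 1`. -/
theorem hardyInt_le_shiftEnergy_of_lt {m : ℕ} {p θ : ℝ} (hp : 1 < p) (hθ : 1 < θ)
    {f : Heis (m + 1) → ℝ} (hf : Measurable f) (hI : hardyInt p θ f ≠ ∞)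
    {e : Heis (m + 1)} (he : -1 < x1 e) (he0 : x1 e < 0) :
    ENNReal.ofReal ((1 - (1 + x1 e) ^ ((θ - 1) / p)) ^ p) * hardyInt p θ f ≤
      shiftEnergy p θ f e := by
  have hp0 : 0 < p := by linarith
  have hτ : 0 < 1 + x1 e := by linarith
  have hx := measurable_x1 (m := m)
  have hpow : ∀ (c : ℝ) (ξ : Heis (m + 1)), ξ ∈ halfSpace (m + 1) →
      ENNReal.ofReal (|c| ^ p / x1 ξ ^ θ) = ENNReal.ofReal (|c| / x1 ξ ^ (θ / p)) ^ p := by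
    intro c ξ hξ
    have hξ : 0 < x1 ξ := hξ
    rw [ENNReal.ofReal_rpow_of_nonneg (by positivity) hp0.le,
      Real.div_rpow (abs_nonneg _) (by positivity), ← Real.rpow_mul hξ.le,
      div_mul_cancel₀ _ hp0.ne']
  set q := (1 + x1 e) ^ ((θ - 1) / p) with hq
  have hq1 : q < 1 :=
    Real.rpow_lt_one hτ.le (by linarith) (div_pos (by linarith) hp0)
  have hq0 : 0 < q := Real.rpow_pos_of_pos hτ _
  have hM := ENNReal.lintegral_Lp_add_le (μ := volume.restrict (halfSpace (m + 1))) (p := p)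
    (f := fun ξ => ENNReal.ofReal (|f ξ - f (Hmul ξ (dil (x1 ξ) e))| / x1 ξ ^ (θ / p)))
    (g := fun ξ => ENNReal.ofReal (|f (Hmul ξ (dil (x1 ξ) e))| / x1 ξ ^ (θ / p)))
    (Measurable.aemeasurable (by fun_prop)) (Measurable.aemeasurable (by fun_prop)) hp.le
  have h1 : ∫⁻ ξ in halfSpace (m + 1),
      ENNReal.ofReal (|f ξ - f (Hmul ξ (dil (x1 ξ) e))| / x1 ξ ^ (θ / p)) ^ p =
      shiftEnergy p θ f e :=
    setLIntegral_congr_fun measurableSet_halfSpace fun ξ hξ => (hpow _ ξ hξ).symm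
  have h2 : ∫⁻ ξ in halfSpace (m + 1),
      ENNReal.ofReal (|f (Hmul ξ (dil (x1 ξ) e))| / x1 ξ ^ (θ / p)) ^ p =
      ENNReal.ofReal ((1 + x1 e) ^ (θ - 1)) * hardyInt p θ f := by
    rw [← lintegral_shifted hf hτ]
    exact setLIntegral_congr_fun measurableSet_halfSpace fun ξ hξ => (hpow _ ξ hξ).symm
  have h3 : hardyInt p θ f ≤ ∫⁻ ξ in halfSpace (m + 1),
      ((fun ξ => ENNReal.ofReal (|f ξ - f (Hmul ξ (dil (x1 ξ) e))| / x1 ξ ^ (θ / p))) +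
        fun ξ => ENNReal.ofReal (|f (Hmul ξ (dil (x1 ξ) e))| / x1 ξ ^ (θ / p))) ξ ^ p := by
    refine setLIntegral_mono' measurableSet_halfSpace fun ξ hξ => ?_
    rw [hpow _ ξ hξ, Pi.add_apply]
    have hξ : 0 < x1 ξ := hξ
    refine ENNReal.rpow_le_rpow ?_ hp0.le
    rw [← ENNReal.ofReal_add (by positivity) (by positivity), ← add_div]
    refine ENNReal.ofReal_le_ofReal (div_le_div_of_nonneg_right ?_ (by positivity))
    have := abs_add_le (f ξ - f (Hmul ξ (dil (x1 ξ) e))) (f (Hmul ξ (dil (x1 ξ) e)))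
    rwa [sub_add_cancel] at this
  rw [h1, h2, ENNReal.mul_rpow_of_nonneg _ _ (by positivity),
    ENNReal.ofReal_rpow_of_pos (by positivity), ← Real.rpow_mul hτ.le, mul_one_div, ← hq] at hM
  have h4 := (ENNReal.rpow_le_rpow h3 (by positivity : 0 ≤ 1 / p)).trans hM
  have hI' : hardyInt p θ f ^ (1 / p) ≠ ∞ := ENNReal.rpow_ne_top_of_nonneg (by positivity) hI
  have h5 : ENNReal.ofReal (1 - q) * hardyInt p θ f ^ (1 / p) ≤
      shiftEnergy p θ f e ^ (1 / p) := by
    rw [ENNReal.ofReal_sub _ hq0.le, ENNReal.ofReal_one, ENNReal.sub_mul fun _ _ => hI', one_mul]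
    exact tsub_le_iff_right.2 h4
  have h6 := ENNReal.rpow_le_rpow h5 hp0.le
  rwa [ENNReal.mul_rpow_of_nonneg _ _ hp0.le, ← ENNReal.rpow_mul, ← ENNReal.rpow_mul,
    one_div_mul_cancel hp0.ne', ENNReal.rpow_one, ENNReal.rpow_one,
    ENNReal.ofReal_rpow_of_pos (by linarith)] at h6

theorem hardyInt_ne_top {m : ℕ} {p θ : ℝ} (hp : 0 < p) {f : Heis (m + 1) → ℝ}
    (hf : Continuous f) (hc : HasCompactSupport f) (hs : tsupport f ⊆ halfSpace (m + 1)) :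
    hardyInt p θ f ≠ ∞ := by
  -- On the support `x₁` stays away from `0`, so the integrand is continuous there.
  have hcont : ContinuousOn (fun ξ : Heis (m + 1) => |f ξ| ^ p / x1 ξ ^ θ) (tsupport f) := by
    refine ContinuousOn.div ?_ ?_ fun ξ hξ => (Real.rpow_pos_of_pos (hs hξ) _).ne'
    · exact (hf.abs.rpow_const fun _ => Or.inr hp.le).continuousOn
    · exact continuous_x1.continuousOn.rpow_const fun ξ hξ => Or.inl (ne_of_gt (hs hξ))
  obtain ⟨M, hM⟩ := hc.isCompact.bddAbove_image hcont
  have hle : hardyInt p θ f ≤ ∫⁻ ξ in tsupport f, ENNReal.ofReal M := by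
    unfold hardyInt
    rw [← lintegral_indicator measurableSet_halfSpace,
      ← lintegral_indicator (isClosed_tsupport f).measurableSet]
    refine lintegral_mono fun ξ => ?_
    by_cases hξ : ξ ∈ tsupport f
    · rw [Set.indicator_of_mem hξ, Set.indicator_of_mem (hs hξ)]
      exact ENNReal.ofReal_le_ofReal (hM ⟨ξ, hξ, rfl⟩)
    · have : f ξ = 0 := image_eq_zero_of_notMem_tsupport hξ
      simp [Set.indicator, this, Real.zero_rpow hp.ne']
  refine ne_top_of_le_ne_top ?_ hle
  rw [setLIntegral_const]
  exact ENNReal.mul_ne_top ENNReal.ofReal_ne_top hc.isCompact.measure_lt_top.ne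

/-! ### Integration over a cone -/

/-- The dilation-invariant cone of points whose coordinates are controlled, according to their
homogeneity, by `u = -x₁ > 0`. -/
def cone (m : ℕ) : Set (Heis (m + 1)) :=
  {e | 0 < -x1 e ∧ (∀ i, |e.1 i| ≤ -x1 e) ∧ (∀ i, |e.2.1 i| ≤ -x1 e) ∧ |e.2.2| ≤ (x1 e) ^ 2}

theorem measurableSet_cone (m : ℕ) : MeasurableSet (cone m) := by
  have hx := measurable_x1 (m := m)
  have h : cone m = {e | 0 < -x1 e} ∩ ((⋂ i, {e | |e.1 i| ≤ -x1 e}) ∩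
      ((⋂ i, {e | |e.2.1 i| ≤ -x1 e}) ∩ {e | |e.2.2| ≤ (x1 e) ^ 2})) := by
    ext e
    simp [cone]
  rw [h]
  refine (measurableSet_lt (by fun_prop) (by fun_prop)).inter
    ((MeasurableSet.iInter fun i => measurableSet_le (by fun_prop) (by fun_prop)).inter
    ((MeasurableSet.iInter fun i => measurableSet_le (by fun_prop) (by fun_prop)).inter
    (measurableSet_le (by fun_prop) (by fun_prop))))

theorem volume_box {k : ℕ} {u : ℝ} (hu : 0 < u) :
    volume {y : Fin k → ℝ | ∀ i, |y i| ≤ u} = ENNReal.ofReal ((2 * u) ^ k) := by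
  have : {y : Fin k → ℝ | ∀ i, |y i| ≤ u} = Set.Icc (fun _ => -u) (fun _ => u) := by
    ext y
    simp [abs_le, Pi.le_def, forall_and]
  rw [this, Real.volume_Icc_pi]
  simp only [sub_neg_eq_add, Finset.prod_const, Finset.card_univ, Fintype.card_fin]
  rw [← two_mul, ENNReal.ofReal_pow (by positivity)]

/-- The slice of the cone at `x₁ = -u` has measure `(2u)^m (2u)^(m+1) 2u²`. -/
theorem lintegral_cone {m : ℕ} {ψ : ℝ → ℝ≥0∞} (hψ : Measurable ψ) :
    ∫⁻ e in cone m, ψ (-x1 e) =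
      ∫⁻ u in Set.Ioi (0 : ℝ), ENNReal.ofReal (2 ^ (2 * m + 2) * u ^ (2 * m + 3)) * ψ u := by
  have hx := measurable_x1 (m := m)
  rw [← lintegral_indicator (measurableSet_cone m), lintegral_heis
    (Measurable.indicator (by fun_prop) (measurableSet_cone m))]
  have h1 : ∀ x : Fin (m + 1) → ℝ, ∫⁻ y, ∫⁻ t, (cone m).indicator (fun e => ψ (-x1 e)) (x, y, t) =
      (Set.Ioi (0 : ℝ)).indicator (fun u => {z : Fin m → ℝ | ∀ i, |z i| ≤ u}.indicator
        (fun _ => ENNReal.ofReal ((2 * u) ^ (m + 1) * (2 * u ^ 2)) * ψ u)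
          (fun i => x i.succ)) (-x 0) := by
    intro x
    by_cases hx0 : 0 < -x 0
    · by_cases hxi : ∀ i : Fin m, |x i.succ| ≤ -x 0
      · have hall : ∀ i, |x i| ≤ -x 0 := by
          intro i
          refine Fin.cases ?_ hxi i
          rw [abs_of_neg (by linarith)]
        rw [Set.indicator_of_mem (by exact hx0), Set.indicator_of_mem (by exact hxi)]
        have h2 : ∀ y t, (cone m).indicator (fun e => ψ (-x1 e)) (x, y, t) =
            {y : Fin (m + 1) → ℝ | ∀ i, |y i| ≤ -x 0}.indicator (fun _ =>
              (Set.Icc (-(x 0) ^ 2) ((x 0) ^ 2)).indicator (fun _ => ψ (-x 0)) t) y := by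
          intro y t
          simp only [Set.indicator, cone, Set.mem_ofPred_eq, x1_succ, hx0, hall, Set.mem_Icc,
            abs_le (a := t), true_and, implies_true]
          split_ifs <;> simp_all
        have hbox : MeasurableSet {y : Fin (m + 1) → ℝ | ∀ i, |y i| ≤ -x 0} := by
          simp only [Set.ofPred_forall]
          exact MeasurableSet.iInter fun i => measurableSet_le (by fun_prop) (by fun_prop)
        simp_rw [h2]
        have h3 : ∀ y : Fin (m + 1) → ℝ,
            ∫⁻ t, {y : Fin (m + 1) → ℝ | ∀ i, |y i| ≤ -x 0}.indicator (fun _ =>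
              (Set.Icc (-(x 0) ^ 2) ((x 0) ^ 2)).indicator (fun _ => ψ (-x 0)) t) y =
            {y : Fin (m + 1) → ℝ | ∀ i, |y i| ≤ -x 0}.indicator (fun _ =>
              ψ (-x 0) * ENNReal.ofReal (2 * (-x 0) ^ 2)) y := by
          intro y
          by_cases hy : y ∈ {y : Fin (m + 1) → ℝ | ∀ i, |y i| ≤ -x 0}
          · simp only [Set.indicator_of_mem hy]
            rw [lintegral_indicator_const measurableSet_Icc, Real.volume_Icc]
            congr 2
            ring
          · simp [Set.indicator_of_notMem hy]
        simp_rw [h3]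
        rw [lintegral_indicator_const hbox, volume_box hx0, mul_assoc,
          ← ENNReal.ofReal_mul (by positivity), mul_comm]
        congr 2
        ring
      · rw [Set.indicator_of_mem (by exact hx0), Set.indicator_of_notMem (by exact hxi)]
        have h2 : ∀ y t, (cone m).indicator (fun e => ψ (-x1 e)) (x, y, t) = 0 := by
          intro y t
          refine Set.indicator_of_notMem (fun h => hxi fun i => ?_) _
          simpa [x1_succ] using h.2.1 i.succ
        simp [h2]
    · rw [Set.indicator_of_notMem (by exact hx0)]
      have h2 : ∀ y t, (cone m).indicator (fun e => ψ (-x1 e)) (x, y, t) = 0 := by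
        intro y t
        refine Set.indicator_of_notMem (fun h => hx0 ?_) _
        simpa [x1_succ] using h.1
      simp [h2]
  simp_rw [h1]
  set F : ℝ × (Fin m → ℝ) → ℝ≥0∞ := fun q => (Set.Ioi (0 : ℝ)).indicator
    (fun u => {z : Fin m → ℝ | ∀ i, |z i| ≤ u}.indicator
        (fun _ => ENNReal.ofReal ((2 * u) ^ (m + 1) * (2 * u ^ 2)) * ψ u) q.2) (-q.1) with hF
  have hFm : Measurable F := by
    have hS : MeasurableSet {q : ℝ × (Fin m → ℝ) | 0 < -q.1 ∧ ∀ i, |q.2 i| ≤ -q.1} := by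
      simp only [Set.ofPred_and, Set.ofPred_forall]
      exact (measurableSet_lt (by fun_prop) (by fun_prop)).inter
        (MeasurableSet.iInter fun i => measurableSet_le (by fun_prop) (by fun_prop))
    have : F = {q : ℝ × (Fin m → ℝ) | 0 < -q.1 ∧ ∀ i, |q.2 i| ≤ -q.1}.indicator fun q =>
        ENNReal.ofReal ((2 * -q.1) ^ (m + 1) * (2 * (-q.1) ^ 2)) * ψ (-q.1) := by
      ext q
      simp only [hF, Set.indicator, Set.mem_Ioi, Set.mem_ofPred_eq]
      split_ifs <;> simp_all
    rw [this]
    exact Measurable.indicator (by fun_prop) hS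
  have h4 := (volume_preserving_piFinSuccAbove (fun _ : Fin (m + 1) => ℝ) 0).lintegral_comp hFm
  have h5 : ∀ x : Fin (m + 1) → ℝ, F (MeasurableEquiv.piFinSuccAbove (fun _ => ℝ) 0 x) =
      F (x 0, fun i => x i.succ) := by
    intro x
    rfl
  simp_rw [h5] at h4
  refine h4.trans ?_
  rw [Measure.volume_eq_prod, lintegral_prod _ hFm.aemeasurable,
    ← lintegral_indicator measurableSet_Ioi]
  have h6 : ∀ v : ℝ, ∫⁻ z, F (v, z) = (Set.Ioi (0 : ℝ)).indicator (fun u =>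
      ENNReal.ofReal (2 ^ (2 * m + 2) * u ^ (2 * m + 3)) * ψ u) (-v) := by
    intro v
    by_cases hv : 0 < -v
    · simp only [hF, Set.indicator_of_mem (show -v ∈ Set.Ioi (0 : ℝ) from hv)]
      rw [lintegral_indicator_const, volume_box hv, mul_right_comm,
        ← ENNReal.ofReal_mul (by positivity)]
      · congr 2
        generalize -v = u
        ring
      · simp only [Set.ofPred_forall]
        exact MeasurableSet.iInter fun i => measurableSet_le (by fun_prop) (by fun_prop)
    · simp [hF, Set.indicator_of_notMem (show -v ∉ Set.Ioi (0 : ℝ) from hv)]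
  simp_rw [h6]
  exact lintegral_neg_eq_self (μ := volume) _

/-! ### The gauge and the Gagliardo energy -/

theorem hd_dil {n : ℕ} {a : ℝ} (ha : 0 < a) (e : Heis n) : hd (dil a e) = a * hd e := by
  have h : zsq (dil a e) ^ 2 + (dil a e).2.2 ^ 2 = a ^ 4 * (zsq e ^ 2 + e.2.2 ^ 2) := by
    simp only [zsq, dil, Pi.smul_apply, smul_eq_mul, mul_pow, ← Finset.mul_sum]
    ring
  rw [hd, h, Real.mul_rpow (by positivity) (by positivity), ← Real.rpow_natCast,
    ← Real.rpow_mul ha.le]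
  norm_num [hd]

theorem Hmul_Hinv_Hmul {n : ℕ} (ξ η : Heis n) : Hmul (Hinv ξ) (Hmul ξ η) = η := by
  refine Prod.ext ?_ (Prod.ext ?_ ?_)
  · simp [Hmul, Hinv]
  · simp [Hmul, Hinv]
  · simp only [Hmul, Hinv, Pi.add_apply, Pi.neg_apply, neg_mul, mul_add, Finset.sum_neg_distrib,
      Finset.sum_add_distrib]
    simp only [mul_comm (ξ.1 _) (ξ.2.1 _)]
    ring

theorem hd_nonneg {n : ℕ} (e : Heis n) : 0 ≤ hd e := by
  unfold hd
  positivity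

theorem measurable_hd {n : ℕ} : Measurable (hd : Heis n → ℝ) := by
  unfold hd zsq
  fun_prop

theorem hd_pos_of_mem_cone {m : ℕ} {e : Heis (m + 1)} (he : e ∈ cone m) : 0 < hd e := by
  have h : 0 < zsq e := by
    have h0 : 0 < e.1 0 ^ 2 := by
      have := he.1
      rw [x1_succ] at this
      nlinarith
    have h1 : e.1 0 ^ 2 ≤ ∑ i, e.1 i ^ 2 :=
      Finset.single_le_sum (f := fun i => e.1 i ^ 2) (fun i _ => sq_nonneg _)
        (Finset.mem_univ 0)
    have h2 : 0 ≤ ∑ i, e.2.1 i ^ 2 := Finset.sum_nonneg fun i _ => sq_nonneg _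
    unfold zsq
    linarith
  unfold hd
  positivity

/-- The constant comparing the gauge with `|x₁|` on the cone. -/
def coneConst (m : ℕ) : ℝ := (4 * ((m : ℝ) + 1) ^ 2 + 1) ^ ((1 : ℝ) / 4)

theorem one_le_coneConst (m : ℕ) : 1 ≤ coneConst m :=
  Real.one_le_rpow (by nlinarith [sq_nonneg ((m : ℝ) + 1)]) (by norm_num)

theorem hd_le_of_mem_cone {m : ℕ} {e : Heis (m + 1)} (he : e ∈ cone m) :
    hd e ≤ coneConst m * -x1 e := by
  obtain ⟨h0, hx, hy, ht⟩ := he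
  set u := -x1 e with hu
  have hsum : ∀ v : Fin (m + 1) → ℝ, (∀ i, |v i| ≤ u) → ∑ i, v i ^ 2 ≤ ((m : ℝ) + 1) * u ^ 2 := by
    intro v hv
    calc ∑ i, v i ^ 2 ≤ ∑ _i : Fin (m + 1), u ^ 2 :=
          Finset.sum_le_sum fun i _ => by
            rw [← sq_abs]
            exact pow_le_pow_left₀ (abs_nonneg _) (hv i) 2
      _ = _ := by simp
  have hz : zsq e ≤ 2 * ((m : ℝ) + 1) * u ^ 2 := by
    unfold zsq
    linarith [hsum _ hx, hsum _ hy]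
  have hz0 : 0 ≤ zsq e := by
    unfold zsq
    positivity
  have ht2 : e.2.2 ^ 2 ≤ u ^ 4 := by
    have : x1 e ^ 2 = u ^ 2 := by rw [hu]; ring
    rw [this] at ht
    calc e.2.2 ^ 2 = |e.2.2| ^ 2 := (sq_abs _).symm
      _ ≤ (u ^ 2) ^ 2 := pow_le_pow_left₀ (abs_nonneg _) ht 2
      _ = u ^ 4 := by ring
  have hmain : zsq e ^ 2 + e.2.2 ^ 2 ≤ (4 * ((m : ℝ) + 1) ^ 2 + 1) * u ^ 4 := by
    have := pow_le_pow_left₀ hz0 hz 2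
    nlinarith
  calc hd e ≤ ((4 * ((m : ℝ) + 1) ^ 2 + 1) * u ^ 4) ^ ((1 : ℝ) / 4) :=
        Real.rpow_le_rpow (by positivity) hmain (by norm_num)
    _ = coneConst m * u := by
        rw [Real.mul_rpow (by positivity) (by positivity), ← Real.rpow_natCast u 4,
          ← Real.rpow_mul h0.le]
        norm_num [coneConst]

/-- In the coordinates `ξ' = ξ ∘ δ_{x₁(ξ)} e` adapted to `ξ`, the Gagliardo energy becomes an
average of shift energies; restricting `ξ` to the half-space and `e` to the cone gives this lower
bound. -/
theorem lintegral_shiftEnergy_le {m : ℕ} {p θ : ℝ} {f : Heis (m + 1) → ℝ} (hf : Measurable f) :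
    ∫⁻ e in cone m, ENNReal.ofReal (hd e ^ (-(hQ (m + 1) + θ))) * shiftEnergy p θ f e ≤
      ∫⁻ ξ, ∫⁻ ξ', ENNReal.ofReal
        (|f ξ - f ξ'| ^ p / hd (Hmul (Hinv ξ) ξ') ^ (hQ (m + 1) + θ)) := by
  have hx := measurable_x1 (m := m)
  have hh := measurable_hd (n := m + 1)
  have hinv : Measurable (Hinv : Heis (m + 1) → Heis (m + 1)) := by
    unfold Hinv
    fun_prop
  calc _ = ∫⁻ e in cone m, ∫⁻ ξ in halfSpace (m + 1),
          ENNReal.ofReal (hd e ^ (-(hQ (m + 1) + θ))) *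
          ENNReal.ofReal (|f ξ - f (Hmul ξ (dil (x1 ξ) e))| ^ p / x1 ξ ^ θ) := by
        refine lintegral_congr fun e => ?_
        rw [lintegral_const_mul' _ _ ENNReal.ofReal_ne_top]
        rfl
    _ = ∫⁻ ξ in halfSpace (m + 1), ∫⁻ e in cone m,
          ENNReal.ofReal (hd e ^ (-(hQ (m + 1) + θ))) *
          ENNReal.ofReal (|f ξ - f (Hmul ξ (dil (x1 ξ) e))| ^ p / x1 ξ ^ θ) := by
        refine lintegral_lintegral_swap (Measurable.aemeasurable ?_)
        simp only [Function.uncurry_def]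
        fun_prop
    _ ≤ ∫⁻ ξ in halfSpace (m + 1), ∫⁻ ξ', ENNReal.ofReal
        (|f ξ - f ξ'| ^ p / hd (Hmul (Hinv ξ) ξ') ^ (hQ (m + 1) + θ)) := by
        refine setLIntegral_mono' measurableSet_halfSpace fun ξ hξ => ?_
        have hξ : 0 < x1 ξ := hξ
        have h1 := lintegral_translate_dil ξ hξ (G := fun ξ' => ENNReal.ofReal
          (|f ξ - f ξ'| ^ p / hd (Hmul (Hinv ξ) ξ') ^ (hQ (m + 1) + θ))) (by fun_prop)
        set a := x1 ξ with ha
        have h2 : ∫⁻ ξ', ENNReal.ofReal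
            (|f ξ - f ξ'| ^ p / hd (Hmul (Hinv ξ) ξ') ^ (hQ (m + 1) + θ)) =
            ENNReal.ofReal (a ^ (2 * (m + 1) + 2)) * ∫⁻ e, ENNReal.ofReal
              (|f ξ - f (Hmul ξ (dil a e))| ^ p /
                hd (Hmul (Hinv ξ) (Hmul ξ (dil a e))) ^ (hQ (m + 1) + θ)) := by
          rw [h1, ← mul_assoc, ← ENNReal.ofReal_mul (by positivity),
            mul_inv_cancel₀ (by positivity), ENNReal.ofReal_one, one_mul]
        rw [h2, ← lintegral_const_mul' _ _ ENNReal.ofReal_ne_top]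
        refine (setLIntegral_mono' (measurableSet_cone m) fun e he => ?_).trans
          (setLIntegral_le_lintegral (cone m) _)
        have hde := hd_pos_of_mem_cone he
        rw [Hmul_Hinv_Hmul, hd_dil hξ, ← ENNReal.ofReal_mul (by positivity),
          ← ENNReal.ofReal_mul (by positivity)]
        refine ENNReal.ofReal_le_ofReal (le_of_eq ?_)
        rw [Real.mul_rpow hξ.le hde.le, Real.rpow_neg hde.le, Real.rpow_add hξ]
        have hq : a ^ hQ (m + 1) = a ^ (2 * (m + 1) + 2) := by
          rw [← Real.rpow_natCast]
          simp [hQ]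
        rw [hq]
        have : a ^ θ ≠ 0 := (Real.rpow_pos_of_pos hξ _).ne'
        have : hd e ^ (hQ (m + 1) + θ) ≠ 0 := (Real.rpow_pos_of_pos hde _).ne'
        field_simp
    _ ≤ _ := setLIntegral_le_lintegral _ _

/-- A lower bound `Φ (-x₁ e)` for the shift energies, uniform in the other coordinates of `e`,
is integrated against the one-dimensional kernel `u^(-1-θ)`. -/
theorem hardy_of_shift_bound {m : ℕ} {p θ : ℝ} (hθ0 : 0 < θ) (hθp : θ ≤ p)
    {f : Heis (m + 1) → ℝ} (hf : Measurable f) {Φ : ℝ → ℝ≥0∞} (hΦ : Measurable Φ)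
    (h : ∀ e : Heis (m + 1), x1 e < 0 → Φ (-x1 e) * hardyInt p θ f ≤ shiftEnergy p θ f e) :
    ENNReal.ofReal (coneConst m ^ (-(hQ (m + 1) + p))) *
      (∫⁻ u in Set.Ioi (0 : ℝ), ENNReal.ofReal (u ^ (-1 - θ)) * Φ u) * hardyInt p θ f ≤
      ∫⁻ ξ, ∫⁻ ξ', ENNReal.ofReal
        (|f ξ - f ξ'| ^ p / hd (Hmul (Hinv ξ) ξ') ^ (hQ (m + 1) + θ)) := by
  have hQ0 : 0 < hQ (m + 1) := by
    unfold hQ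
    positivity
  have hM := one_le_coneConst m
  have hx := measurable_x1 (m := m)
  refine le_trans ?_ (lintegral_shiftEnergy_le hf)
  have h1 : ENNReal.ofReal (coneConst m ^ (-(hQ (m + 1) + p))) *
      (∫⁻ u in Set.Ioi (0 : ℝ), ENNReal.ofReal (u ^ (-1 - θ)) * Φ u) ≤
      ∫⁻ e in cone m, ENNReal.ofReal (coneConst m ^ (-(hQ (m + 1) + p)) *
        (-x1 e) ^ (-(hQ (m + 1) + θ))) * Φ (-x1 e) := by
    rw [lintegral_cone (ψ := fun u => ENNReal.ofReal (coneConst m ^ (-(hQ (m + 1) + p)) *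
        u ^ (-(hQ (m + 1) + θ))) * Φ u) (by fun_prop),
      ← lintegral_const_mul' _ _ ENNReal.ofReal_ne_top]
    refine setLIntegral_mono' measurableSet_Ioi fun u hu => ?_
    have hu : 0 < u := hu
    rw [← mul_assoc, ← mul_assoc, ← ENNReal.ofReal_mul (by positivity),
      ← ENNReal.ofReal_mul (by positivity)]
    refine mul_le_mul' (ENNReal.ofReal_le_ofReal ?_) le_rfl
    have hpow : u ^ (2 * m + 3) * u ^ (-(hQ (m + 1) + θ)) = u ^ (-1 - θ) := by
      rw [← Real.rpow_natCast, ← Real.rpow_add hu]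
      congr 1
      push_cast [hQ]
      ring
    calc coneConst m ^ (-(hQ (m + 1) + p)) * u ^ (-1 - θ)
        ≤ 2 ^ (2 * m + 2) * (coneConst m ^ (-(hQ (m + 1) + p)) * u ^ (-1 - θ)) :=
          le_mul_of_one_le_left (by positivity) (one_le_pow₀ (by norm_num))
      _ = _ := by
          rw [← hpow]
          ring
  calc _ ≤ (∫⁻ e in cone m, ENNReal.ofReal (coneConst m ^ (-(hQ (m + 1) + p)) *
        (-x1 e) ^ (-(hQ (m + 1) + θ))) * Φ (-x1 e)) * hardyInt p θ f := by gcongr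
    _ = ∫⁻ e in cone m, ENNReal.ofReal (coneConst m ^ (-(hQ (m + 1) + p)) *
        (-x1 e) ^ (-(hQ (m + 1) + θ))) * Φ (-x1 e) * hardyInt p θ f := by
        rw [lintegral_mul_const _ (by fun_prop)]
    _ ≤ _ := by
        refine setLIntegral_mono' (measurableSet_cone m) fun e he => ?_
        rw [mul_assoc]
        have he0 : 0 < -x1 e := he.1
        refine mul_le_mul' (ENNReal.ofReal_le_ofReal ?_) (h e (by linarith))
        have hde := hd_pos_of_mem_cone he
        calc coneConst m ^ (-(hQ (m + 1) + p)) * (-x1 e) ^ (-(hQ (m + 1) + θ))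
            ≤ coneConst m ^ (-(hQ (m + 1) + θ)) * (-x1 e) ^ (-(hQ (m + 1) + θ)) := by
              gcongr
          _ = (coneConst m * -x1 e) ^ (-(hQ (m + 1) + θ)) := by
              rw [Real.mul_rpow (by positivity) he0.le]
          _ ≤ hd e ^ (-(hQ (m + 1) + θ)) :=
              Real.rpow_le_rpow_of_nonpos hde (hd_le_of_mem_cone he) (by linarith)

/-! ### One-dimensional integrals and conclusion -/

theorem lintegral_tail {θ : ℝ} (hθ : 0 < θ) :
    ENNReal.ofReal (1 / θ) ≤ ∫⁻ u in Set.Ioi (0 : ℝ), ENNReal.ofReal (u ^ (-1 - θ)) *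
      (Set.Ici (1 : ℝ)).indicator 1 u := by
  have h1 : ∫⁻ u in Set.Ioi (1 : ℝ), ENNReal.ofReal (u ^ (-1 - θ)) = ENNReal.ofReal (1 / θ) := by
    rw [← ofReal_integral_eq_lintegral_ofReal
      (integrableOn_Ioi_rpow_of_lt (by linarith) one_pos)
      ((ae_restrict_mem measurableSet_Ioi).mono fun u hu =>
        Real.rpow_nonneg (zero_le_one.trans (le_of_lt hu)) _),
      integral_Ioi_rpow_of_lt (by linarith) one_pos]
    congr 1
    rw [Real.one_rpow, show -1 - θ + 1 = -θ by ring, neg_div_neg_eq]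
  rw [← h1]
  refine le_trans (setLIntegral_mono' measurableSet_Ioi fun u hu => ?_)
    (lintegral_mono_set (Set.Ioi_subset_Ioi zero_le_one))
  rw [Set.indicator_of_mem (Set.mem_Ici.2 (le_of_lt hu)), Pi.one_apply, mul_one]

theorem lintegral_near {p θ b : ℝ} (hb : 0 ≤ b) (hθp : θ < p) :
    ENNReal.ofReal (b ^ p / (p - θ)) ≤
      ∫⁻ u in Set.Ioi (0 : ℝ), ENNReal.ofReal (u ^ (-1 - θ)) *
        (Set.Ioo (0 : ℝ) 1).indicator (fun u => ENNReal.ofReal ((b * u) ^ p)) u := by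
  have hI : IntegrableOn (fun u : ℝ => b ^ p * u ^ (p - θ - 1)) (Set.Ioo 0 1) :=
    ((intervalIntegral.integrableOn_Ioo_rpow_iff one_pos).2 (by linarith)).const_mul _
  have h1 : ∫⁻ u in Set.Ioo (0 : ℝ) 1, ENNReal.ofReal (b ^ p * u ^ (p - θ - 1)) =
      ENNReal.ofReal (b ^ p / (p - θ)) := by
    rw [← ofReal_integral_eq_lintegral_ofReal hI
      ((ae_restrict_mem measurableSet_Ioo).mono fun u hu => by
        have := hu.1
        positivity), integral_const_mul, ← integral_Ioc_eq_integral_Ioo,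
      ← intervalIntegral.integral_of_le zero_le_one, integral_rpow (Or.inl (by linarith))]
    congr 1
    rw [Real.one_rpow, sub_add_cancel, Real.zero_rpow (by linarith), sub_zero, mul_one_div]
  rw [← h1]
  refine le_trans (setLIntegral_mono' measurableSet_Ioo fun u hu => ?_)
    (lintegral_mono_set Set.Ioo_subset_Ioi_self)
  have hu0 := hu.1
  rw [Set.indicator_of_mem hu, ← ENNReal.ofReal_mul (by positivity), Real.mul_rpow hb hu0.le,
    show p - θ - 1 = (-1 - θ) + p by ring, Real.rpow_add hu0]
  exact ENNReal.ofReal_le_ofReal (le_of_eq (by ring))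

/-- Theorem 1.1: fractional Hardy inequality on the half-space of `ℍⁿ`,
with a constant `C = C(n,p) > 0` depending only on `n` and `p`. -/
theorem fractional_hardy_halfspace (n : ℕ) (hn : 1 ≤ n) (p : ℝ) (hp1 : 1 < p) :
    ∃ C : ℝ, 0 < C ∧ ∀ s : ℝ, 0 < s → s < 1 →
      ∀ f : Heis n → ℝ, ContDiff ℝ (⊤ : ℕ∞) f → HasCompactSupport f →
        tsupport f ⊆ halfSpace n →
        ENNReal.ofReal (C / (s * (1 - s))) *
            (∫⁻ ξ in halfSpace n, ENNReal.ofReal (|f ξ| ^ p / x1 ξ ^ (s * p))) ≤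
          ∫⁻ ξ, ∫⁻ ξ', ENNReal.ofReal
            (|f ξ - f ξ'| ^ p / hd (Hmul (Hinv ξ) ξ') ^ (hQ n + s * p)) := by
  obtain ⟨m, rfl⟩ : ∃ m, n = m + 1 := ⟨n - 1, by omega⟩
  have hp0 : 0 < p := by linarith
  set K := coneConst m ^ (-(hQ (m + 1) + p)) with hK
  have hK0 : 0 < K := Real.rpow_pos_of_pos (by linarith [one_le_coneConst m]) _
  -- The two regimes of `s` meet at `s * p = (1 + p) / 2`, the midpoint of `1` and `p`.
  set b := (p - 1) / (2 * p) with hb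
  have hb0 : 0 < b := div_pos (by linarith) (by linarith)
  have hb1 : b * p = (p - 1) / 2 := by
    rw [hb]
    field_simp
  have hbp : 0 < b ^ p := Real.rpow_pos_of_pos hb0 _
  have hC0 : 0 < min (K * b / p) (K * b ^ p / (2 * p)) := lt_min (by positivity) (by positivity)
  refine ⟨min (K * b / p) (K * b ^ p / (2 * p)), hC0, ?_⟩
  intro s hs0 hs1 f hfs hfc hft
  have hθ0 : 0 < s * p := by positivity
  have hθp : s * p < p := by nlinarith
  have hfm : Measurable f := hfs.continuous.measurable
  have hf0 : ∀ ξ, x1 ξ ≤ 0 → f ξ = 0 := fun ξ hξ =>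
    image_eq_zero_of_notMem_tsupport fun hmem => absurd (hft hmem) (not_lt.2 hξ)
  have h1s : 0 < 1 - s := by linarith
  rcases le_or_gt s (1 - b) with hsb | hsb
  · -- Shifts out of the half-space give the factor `1 / s`, and `1 - s ≥ b`.
    refine le_trans ?_ (hardy_of_shift_bound (Φ := (Set.Ici (1 : ℝ)).indicator 1) hθ0 hθp.le hfm
      (measurable_one.indicator measurableSet_Ici) fun e he => ?_)
    · change _ * hardyInt p (s * p) f ≤ _
      gcongr ?_ * _
      refine le_trans ?_ (mul_le_mul_right (lintegral_tail hθ0) _)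
      rw [← ENNReal.ofReal_mul hK0.le]
      refine ENNReal.ofReal_le_ofReal ?_
      calc min (K * b / p) (K * b ^ p / (2 * p)) / (s * (1 - s))
          ≤ (K * b / p) / (s * b) := by
            gcongr
            · exact min_le_left _ _
            · linarith
        _ = K * (1 / (s * p)) := by field_simp
    · by_cases h1 : 1 ≤ -x1 e
      · rw [Set.indicator_of_mem (Set.mem_Ici.2 h1), Pi.one_apply, one_mul]
        exact hardyInt_le_shiftEnergy_of_le hf0 (by linarith)
      · rw [Set.indicator_of_notMem (by simpa using h1), zero_mul]
        exact zero_le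
  · -- Shifts inside the half-space give the factor `1 / (1 - s)`, and `s ≥ 1 / 2`.
    have hθ1 : b * p ≤ s * p - 1 := by nlinarith
    have hs2 : 1 / 2 ≤ s := by
      have : b ≤ 1 / 2 := by
        rw [hb, div_le_div_iff₀ (by positivity) (by norm_num)]
        linarith
      linarith
    refine le_trans ?_ (hardy_of_shift_bound
      (Φ := (Set.Ioo (0 : ℝ) 1).indicator fun u => ENNReal.ofReal ((b * u) ^ p)) hθ0 hθp.le hfm
      (Measurable.indicator (by fun_prop) measurableSet_Ioo) fun e he => ?_)
    · change _ * hardyInt p (s * p) f ≤ _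
      gcongr ?_ * _
      refine le_trans ?_ (mul_le_mul_right (lintegral_near hb0.le hθp) _)
      rw [← ENNReal.ofReal_mul hK0.le]
      refine ENNReal.ofReal_le_ofReal ?_
      calc min (K * b / p) (K * b ^ p / (2 * p)) / (s * (1 - s))
          ≤ (K * b ^ p / (2 * p)) / (1 / 2 * (1 - s)) := by
            gcongr
            exact min_le_right _ _
        _ = K * (b ^ p / (p - s * p)) := by
            rw [show p - s * p = p * (1 - s) by ring]
            field_simp
    · by_cases h1 : -x1 e < 1
      · rw [Set.indicator_of_mem (Set.mem_Ioo.2 ⟨by linarith, h1⟩)]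
        refine le_trans ?_ (hardyInt_le_shiftEnergy_of_lt hp1 (by nlinarith) hfm
          (hardyInt_ne_top hp0 hfs.continuous hfc hft) (by linarith) he)
        gcongr
        · nlinarith
        · -- Bernoulli: `(1 - u) ^ β ≤ 1 - β u` for `0 ≤ β ≤ 1`.
          have hβ0 : b ≤ (s * p - 1) / p := by rwa [le_div_iff₀ hp0]
          have hβ1 : (s * p - 1) / p ≤ 1 := by
            rw [div_le_one hp0]
            linarith
          have := rpow_one_add_le_one_add_mul_self (s := x1 e) (by linarith)
            (hb0.le.trans hβ0) hβ1
          nlinarith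
      · rw [Set.indicator_of_notMem (fun hh => h1 hh.2), zero_mul]
        exact zero_le
end
end

section
/- Let n ≥ 1, 1 < p < ∞, 0 < s < 1 and α ≥ 0. There exists a constant C = C(n,p,α) > 0, depending only on n, p and α, such that for every f ∈ C_c^∞(ℍⁿ₊), (C/((s+α/p)(1−s))) · ∫_{ℍⁿ₊} |f(ξ)|^p / x₁^{sp+α} dξ ≤ ∫_{ℍⁿ} ∫_{ℍⁿ} |f(ξ)−f(ξ')|^p / (d(ξ⁻¹∘ξ')^{Q+sp} |z−z'|^α) dξ' dξ. -/
/-!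
Every `ξ' ∈ ℍⁿ` is `ξ ∘ δ_{x₁(ξ)}(ζ)` for a unique relative displacement `ζ`, when `x₁(ξ) > 0`.
In the variables `(ξ, ζ)` the kernel factors as `K(ζ) x₁(ξ)^{-(sp+α)}` (`inner_eq`), where
`K(ζ) = 1 / (d(ζ)^{Q+sp} |z_ζ|^α)`; so by Tonelli the double integral is at least
`∫ K(ζ) I(ζ) dζ` with `I(ζ) = ∫_{ℍⁿ₊} |f(ξ) - f(ξ ∘ δ_{x₁(ξ)}(ζ))|^p / x₁^{sp+α} dξ` (`incr_le`).
It remains to bound `I(ζ)` below by a multiple of the Hardy integral `H` for each `ζ` with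
`ζ₁ < 0`. The displacement multiplies `x₁` by `λ = 1 + ζ₁`.

* If `λ ≤ 0`, the endpoint lies outside the half-space, where `f = 0`, and `I(ζ) ≥ H`
  (`incr_far`).
* If `0 < λ < 1`, the map `ξ ↦ ξ ∘ δ_{x₁(ξ)}(ζ)` preserves the half-space and has constant
  Jacobian `λ` (`mp_shift`), so the weighted norm of the shifted function is
  `λ^{(sp+α-1)/p} H^{1/p}`, and Minkowski's inequality gives
  `I(ζ) ≥ (1 - λ^{(sp+α-1)/p})^p H` (`incr_near`). When `(sp+α-1)/p ≥ γ` with `0 < γ ≤ 1`,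
  Bernoulli's inequality bounds the factor below by `(γ |ζ₁|)^p`.

The integral of `K` over displacements of dyadic size `r` is at least `κ r^{-(sp+α)}` with `κ`
independent of `s` (`ker_box`). Summing over `r ≥ 1` in the first case gives the factor
`1 / (sp + α)` (`far_bound`), which suffices when `s` stays away from `1`. Summing
`r^p r^{-(sp+α)}` over `r < 1` in the second case gives `1 / (p (1 - s))` (`near_bound`), which
suffices when `s` stays above some `s₀ > 1/p`. Taking `s₀ ∈ (1/p, 1)` covers all `s`.
-/

open MeasureTheory Real Filter Topology ENNReal

noncomputable section

namespace HeisHardy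

/-! ### Jacobians of triangular maps -/

lemma mp_affine {n : ℕ} (a : Fin n → ℝ) {r : ℝ} (hr : r ≠ 0) :
    MeasurePreserving (fun v : Fin n → ℝ => a + r • v) volume
      (ENNReal.ofReal |(r ^ n)⁻¹| • volume) := by
  have h1 : MeasurePreserving (fun v : Fin n → ℝ => r • v) volume
      (ENNReal.ofReal |(r ^ n)⁻¹| • volume) := by
    refine ⟨by fun_prop, ?_⟩
    rw [Measure.map_addHaar_smul _ hr]
    simp
  have h2 := (measurePreserving_add_left (volume : Measure (Fin n → ℝ)) a).smul_measure
    (ENNReal.ofReal |(r ^ n)⁻¹|)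
  exact h2.comp h1

lemma mp_mul {r : ℝ} (hr : r ≠ 0) :
    MeasurePreserving (fun v : ℝ => r * v) volume (ENNReal.ofReal |r⁻¹| • volume) :=
  ⟨by fun_prop, Real.map_volume_mul_left hr ▸ rfl⟩

/-- A triangular map of `ℍⁿ` (each coordinate block shifted and distorted depending on the
previous ones) multiplies the volume by the product of the factors of its diagonal blocks. -/
lemma mp_tri {n : ℕ} {A : (Fin n → ℝ) → Fin n → ℝ} {B : (Fin n → ℝ) → (Fin n → ℝ) → Fin n → ℝ}
    {g : (Fin n → ℝ) → (Fin n → ℝ) → ℝ} {ρ : ℝ} {a b c : ℝ≥0∞}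
    (hA : MeasurePreserving A volume (a • volume))
    (hBm : Measurable (Function.uncurry B))
    (hB : ∀ x, MeasurePreserving (B x) volume (b • volume))
    (hg : Measurable (Function.uncurry g))
    (hc : MeasurePreserving (fun t : ℝ => ρ * t) volume (c • volume)) :
    MeasurePreserving (fun ξ : Heis n => ((A ξ.1, B ξ.1 ξ.2.1, g ξ.1 ξ.2.1 + ρ * ξ.2.2) : Heis n))
      volume ((a * b * c) • volume) := by
  have hC : ∀ u : ℝ, MeasurePreserving (fun t : ℝ => u + ρ * t) volume (c • volume) := fun u =>
    ((measurePreserving_add_left (volume : Measure ℝ) u).smul_measure c).comp hc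
  have hfib : ∀ x, MeasurePreserving
      (fun q : (Fin n → ℝ) × ℝ => (B x q.1, g x q.1 + ρ * q.2)) volume ((b * c) • volume) := by
    intro x
    have hgx : Measurable (g x) := hg.comp measurable_prodMk_left
    have := (hB x).skew_product (μc := (volume : Measure ℝ)) (μd := c • (volume : Measure ℝ))
      (g := fun y t => g x y + ρ * t)
      (by
        have : Measurable fun q : (Fin n → ℝ) × ℝ => g x q.1 + ρ * q.2 := by fun_prop
        exact this)
      (Eventually.of_forall fun y => (hC (g x y)).map_eq)
    rw [Measure.prod_smul_left, Measure.prod_smul_right, smul_smul] at this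
    exact this
  have := hA.skew_product (μc := (volume : Measure ((Fin n → ℝ) × ℝ)))
      (μd := (b * c) • (volume : Measure ((Fin n → ℝ) × ℝ)))
      (g := fun x q => (B x q.1, g x q.1 + ρ * q.2))
      (by
        have h1 : Measurable fun w : (Fin n → ℝ) × (Fin n → ℝ) × ℝ => B w.1 w.2.1 :=
          hBm.comp (measurable_fst.prodMk (measurable_fst.comp measurable_snd))
        have h2 : Measurable fun w : (Fin n → ℝ) × (Fin n → ℝ) × ℝ => g w.1 w.2.1 :=
          hg.comp (measurable_fst.prodMk (measurable_fst.comp measurable_snd))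
        have : Measurable fun w : (Fin n → ℝ) × (Fin n → ℝ) × ℝ =>
          (B w.1 w.2.1, g w.1 w.2.1 + ρ * w.2.2) := h1.prodMk (by fun_prop)
        exact this)
      (Eventually.of_forall fun x => (hfib x).map_eq)
  rw [Measure.prod_smul_left, Measure.prod_smul_right, smul_smul, ← mul_assoc] at this
  exact this

/-- The Heisenberg dilation `δ_r(x, y, t) = (r x, r y, r² t)`. -/
def dil {n : ℕ} (r : ℝ) (a : Heis n) : Heis n := (r • a.1, r • a.2.1, r ^ 2 * a.2.2)

/-- The point `ξ ∘ δ_{x₁(ξ)}(ζ)`: the displacement `ζ` is measured relative to the distance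
of `ξ` from the boundary of the half-space. -/
def shift {n : ℕ} (ξ ζ : Heis n) : Heis n := Hmul ξ (dil (x1 ξ) ζ)

lemma x1_eq {n : ℕ} (hn : 0 < n) (a : Heis n) : x1 a = a.1 ⟨0, hn⟩ := by simp [x1, hn]

lemma x1_shift {n : ℕ} (hn : 0 < n) (ξ ζ : Heis n) :
    x1 (shift ξ ζ) = (1 + x1 ζ) * x1 ξ := by
  simp [x1_eq hn, shift, Hmul, dil]; ring

@[fun_prop]
lemma continuous_x1 {n : ℕ} : Continuous (x1 : Heis n → ℝ) := by
  unfold x1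
  split_ifs <;> fun_prop

@[fun_prop]
lemma continuous_shift {n : ℕ} : Continuous fun w : Heis n × Heis n => shift w.1 w.2 := by
  unfold shift Hmul dil
  fun_prop

/-- For fixed `ξ`, the Jacobian of `ζ ↦ ξ ∘ δ_r(ζ)` is `r^Q`. -/
lemma mp_dil {n : ℕ} (ξ : Heis n) {r : ℝ} (hr : 0 < r) :
    MeasurePreserving (fun ζ : Heis n => Hmul ξ (dil r ζ)) volume
      (ENNReal.ofReal ((r ^ (2 * n + 2))⁻¹) • volume) := by
  have h := mp_tri (n := n) (A := fun x => ξ.1 + r • x) (B := fun _ y => ξ.2.1 + r • y)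
    (g := fun x y => ξ.2.2 + 2 * (∑ i, ξ.2.1 i * (r * x i)) - 2 * (∑ i, ξ.1 i * (r * y i)))
    (ρ := r ^ 2)
    (mp_affine ξ.1 hr.ne') (by unfold Function.uncurry; fun_prop)
    (fun _ => mp_affine ξ.2.1 hr.ne') (by unfold Function.uncurry; fun_prop)
    (mp_mul (by positivity))
  convert h using 1
  · ext ζ <;> simp [Hmul, dil]; ring
  · rw [← ENNReal.ofReal_mul (abs_nonneg _), ← ENNReal.ofReal_mul (by positivity)]
    congr 2
    rw [abs_of_pos (by positivity), abs_of_pos (by positivity), ← mul_inv, ← mul_inv]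
    congr 1
    ring

/-- For fixed `ζ`, the map `ξ ↦ ξ ∘ δ_{x₁(ξ)}(ζ)` is triangular with diagonal blocks
`I + ζ_x ⊗ e₁`, `I`, `1`, so that its Jacobian is `1 + ζ₁`. -/
lemma mp_shift {n : ℕ} (hn : 0 < n) (ζ : Heis n) (hζ : 0 < 1 + x1 ζ) :
    MeasurePreserving (fun ξ : Heis n => shift ξ ζ) volume
      (ENNReal.ofReal ((1 + x1 ζ)⁻¹) • volume) := by
  have hA : MeasurePreserving (fun x : Fin n → ℝ => x + (x ⟨0, hn⟩) • ζ.1) volume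
      (ENNReal.ofReal ((1 + x1 ζ)⁻¹) • volume) := by
    refine ⟨by fun_prop, ?_⟩
    have hdet : LinearMap.det
        (LinearMap.transvection (LinearMap.proj (R := ℝ) (φ := fun _ : Fin n => ℝ) ⟨0, hn⟩) ζ.1)
        = 1 + x1 ζ := by
      rw [LinearMap.transvection.det, x1_eq hn]; rfl
    have := Measure.map_linearMap_addHaar_eq_smul_addHaar (volume : Measure (Fin n → ℝ))
      (f := LinearMap.transvection
        (LinearMap.proj (R := ℝ) (φ := fun _ : Fin n => ℝ) ⟨0, hn⟩) ζ.1)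
      (by rw [hdet]; exact hζ.ne')
    rw [hdet, abs_of_pos (by positivity)] at this
    exact this
  have h := mp_tri (n := n) (A := fun x => x + (x ⟨0, hn⟩) • ζ.1)
    (B := fun x y => y + (x ⟨0, hn⟩) • ζ.2.1) (b := 1) (c := 1) (ρ := 1)
    (g := fun x y => (x ⟨0, hn⟩) ^ 2 * ζ.2.2 + 2 * (∑ i, y i * (x ⟨0, hn⟩ * ζ.1 i))
      - 2 * (∑ i, x i * (x ⟨0, hn⟩ * ζ.2.1 i))) hA
    (by unfold Function.uncurry; fun_prop)
    (fun x => by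
      rw [one_smul]
      exact measurePreserving_add_right (volume : Measure (Fin n → ℝ)) _)
    (by unfold Function.uncurry; fun_prop)
    (by simp only [one_mul, one_smul]; exact MeasurePreserving.id (volume : Measure ℝ))
  convert h using 1
  · ext ξ <;> simp [shift, Hmul, dil, x1_eq hn]; ring
  · simp

/-! ### The kernel and the change to relative displacements -/

/-- The kernel `1 / (d(η)^{Q+sp} |z_η|^α)`. -/
def ker {n : ℕ} (p s α : ℝ) (η : Heis n) : ℝ := (hd η ^ (hQ n + s * p) * znorm η ^ α)⁻¹

lemma Hinv_mul {n : ℕ} (ξ η : Heis n) : Hmul (Hinv ξ) (Hmul ξ η) = η := by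
  ext i
  · simp [Hmul, Hinv]
  · simp [Hmul, Hinv]
  · simp only [Hmul, Hinv, Pi.add_apply, Pi.neg_apply, mul_add, neg_mul, Finset.sum_add_distrib,
      Finset.sum_neg_distrib]
    have : ∑ x, ξ.2.1 x * ξ.1 x = ∑ x, ξ.1 x * ξ.2.1 x :=
      Finset.sum_congr rfl fun _ _ => mul_comm _ _
    linarith

lemma zsq_nonneg {n : ℕ} (a : Heis n) : 0 ≤ zsq a := by unfold zsq; positivity

lemma hd_nonneg {n : ℕ} (a : Heis n) : 0 ≤ hd a := by unfold hd; positivity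

lemma znorm_nonneg {n : ℕ} (a : Heis n) : 0 ≤ znorm a := Real.sqrt_nonneg _

lemma zsq_dil {n : ℕ} (r : ℝ) (a : Heis n) : zsq (dil r a) = r ^ 2 * zsq a := by
  simp [zsq, dil, mul_pow, Finset.mul_sum, mul_add]

lemma znorm_dil {n : ℕ} {r : ℝ} (hr : 0 < r) (a : Heis n) : znorm (dil r a) = r * znorm a := by
  rw [znorm, zsq_dil, Real.sqrt_mul (by positivity), Real.sqrt_sq hr.le, znorm]

lemma hd_dil {n : ℕ} {r : ℝ} (hr : 0 < r) (a : Heis n) : hd (dil r a) = r * hd a := by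
  have h : (zsq (dil r a)) ^ 2 + ((dil r a).2.2) ^ 2 = r ^ 4 * (zsq a ^ 2 + a.2.2 ^ 2) := by
    rw [zsq_dil]; simp only [dil]; ring
  rw [hd, h, Real.mul_rpow (by positivity) (by positivity), hd]
  congr 1
  rw [← Real.rpow_natCast, ← Real.rpow_mul hr.le]
  norm_num

lemma ker_dil {n : ℕ} (p s α : ℝ) {r : ℝ} (hr : 0 < r) (a : Heis n) :
    ker p s α (dil r a) = (r ^ (2 * n + 2) * r ^ (s * p + α))⁻¹ * ker p s α a := by
  rw [ker, ker, hd_dil hr, znorm_dil hr, Real.mul_rpow hr.le (hd_nonneg _),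
    Real.mul_rpow hr.le (znorm_nonneg _), ← mul_inv]
  congr 1
  have : (r : ℝ) ^ (2 * n + 2) = r ^ (hQ n) := by
    rw [hQ, ← Real.rpow_natCast]; push_cast; rfl
  rw [this, Real.rpow_add hr, Real.rpow_add hr]
  ring

lemma ker_nonneg {n : ℕ} (p s α : ℝ) (a : Heis n) : 0 ≤ ker p s α a := by
  have := hd_nonneg a
  have := znorm_nonneg a
  unfold ker; positivity

@[fun_prop]
lemma measurable_ker {n : ℕ} (p s α : ℝ) : Measurable (ker p s α : Heis n → ℝ) := by
  unfold ker hd znorm zsq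
  fun_prop

/-- The inner integral of the seminorm in the relative displacement `ζ`, where
`ξ' = ξ ∘ δ_{x₁(ξ)}(ζ)`. -/
lemma inner_eq {n : ℕ} (p s α : ℝ) {f : Heis n → ℝ} (hf : Continuous f)
    (ξ : Heis n) (hξ : 0 < x1 ξ) :
    ∫⁻ ξ', ENNReal.ofReal
      (|f ξ - f ξ'| ^ p / (hd (Hmul (Hinv ξ) ξ') ^ (hQ n + s * p) * zdist ξ ξ' ^ α)) =
    ∫⁻ ζ, ENNReal.ofReal (ker p s α ζ) *
      ENNReal.ofReal (|f ξ - f (shift ξ ζ)| ^ p / x1 ξ ^ (s * p + α)) := by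
  have hm : Measurable fun ξ' : Heis n => ENNReal.ofReal
      (|f ξ - f ξ'| ^ p * ker p s α (Hmul (Hinv ξ) ξ')) := by
    have h1 : Measurable fun ξ' : Heis n => Hmul (Hinv ξ) ξ' := by
      unfold Hmul; fun_prop
    have := (measurable_ker (n := n) p s α).comp h1
    have h2 := hf.measurable
    simp only [Function.comp_def] at this
    fun_prop
  have h := (mp_dil ξ hξ).lintegral_comp hm
  rw [lintegral_smul_measure] at h
  have hr : (0 : ℝ) < x1 ξ ^ (2 * n + 2) := by positivity
  calc _ = ∫⁻ ξ', ENNReal.ofReal (|f ξ - f ξ'| ^ p * ker p s α (Hmul (Hinv ξ) ξ')) := rfl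
    _ = ENNReal.ofReal (x1 ξ ^ (2 * n + 2)) * ∫⁻ ζ, ENNReal.ofReal
        (|f ξ - f (shift ξ ζ)| ^ p * ker p s α (Hmul (Hinv ξ) (shift ξ ζ))) := by
      simp only [shift]
      rw [h, smul_eq_mul, ← mul_assoc, ← ENNReal.ofReal_mul hr.le, mul_inv_cancel₀ hr.ne',
        ENNReal.ofReal_one, one_mul]
    _ = _ := by
      rw [← lintegral_const_mul' _ _ ENNReal.ofReal_ne_top]
      congr 1
      ext ζ
      rw [shift, Hinv_mul, ker_dil p s α hξ, ← ENNReal.ofReal_mul hr.le,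
        ← ENNReal.ofReal_mul (ker_nonneg _ _ _ _)]
      congr 1
      have : 0 < x1 ξ ^ (s * p + α) := by positivity
      field_simp

lemma measurableSet_half (n : ℕ) : MeasurableSet (halfSpace n) :=
  measurableSet_lt measurable_const continuous_x1.measurable

/-- The Hardy integral `∫_{ℍⁿ₊} |f|^p / x₁^θ`. -/
def hardy {n : ℕ} (p θ : ℝ) (f : Heis n → ℝ) : ℝ≥0∞ :=
  ∫⁻ ξ in halfSpace n, ENNReal.ofReal (|f ξ| ^ p / x1 ξ ^ θ)

/-- The weighted `L^p` norm (to the power `p`) of the increment of `f` under the relative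
displacement `ζ`. -/
def incr {n : ℕ} (p θ : ℝ) (f : Heis n → ℝ) (ζ : Heis n) : ℝ≥0∞ :=
  ∫⁻ ξ in halfSpace n, ENNReal.ofReal (|f ξ - f (shift ξ ζ)| ^ p / x1 ξ ^ θ)

/-- The seminorm dominates the average of the increments against the kernel. -/
lemma incr_le {n : ℕ} (p s α : ℝ) {f : Heis n → ℝ} (hf : Continuous f) :
    ∫⁻ ζ, ENNReal.ofReal (ker p s α ζ) * incr p (s * p + α) f ζ ≤
    ∫⁻ ξ, ∫⁻ ξ', ENNReal.ofReal
      (|f ξ - f ξ'| ^ p / (hd (Hmul (Hinv ξ) ξ') ^ (hQ n + s * p) * zdist ξ ξ' ^ α)) := by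
  refine le_trans (le_of_eq ?_) (setLIntegral_le_lintegral (halfSpace n) _)
  rw [setLIntegral_congr_fun (measurableSet_half n) (fun ξ hξ => inner_eq p s α hf ξ hξ)]
  rw [lintegral_lintegral_swap]
  · congr 1
    ext ζ
    rw [incr, lintegral_const_mul' _ _ ENNReal.ofReal_ne_top]
  · refine Measurable.aemeasurable ?_
    have h1 : Measurable fun w : Heis n × Heis n => f (shift w.1 w.2) :=
      (hf.comp continuous_shift).measurable
    have h2 := hf.measurable
    have h3 : Measurable (x1 : Heis n → ℝ) := continuous_x1.measurable
    unfold Function.uncurry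
    fun_prop

/-! ### Lower bounds for the increments -/

lemma hardy_lt_top {n : ℕ} {p θ : ℝ} (hp : 0 < p) {f : Heis n → ℝ} (hf : Continuous f)
    (hc : HasCompactSupport f) (hs : tsupport f ⊆ halfSpace n) : hardy p θ f < ⊤ := by
  have hK : IsCompact (tsupport f) := hc
  have hcont : ContinuousOn (fun ξ : Heis n => |f ξ| ^ p / x1 ξ ^ θ) (tsupport f) := by
    refine ContinuousOn.div ?_ ?_ ?_
    · exact (hf.abs.rpow_const fun _ => Or.inr hp.le).continuousOn
    · exact continuous_x1.continuousOn.rpow_const fun ξ hξ => Or.inl (hs hξ).ne'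
    · intro ξ hξ
      exact (Real.rpow_pos_of_pos (hs hξ) _).ne'
  refine lt_of_le_of_lt ?_ (hcont.integrableOn_compact (μ := volume) hK).lintegral_lt_top
  rw [hardy, ← lintegral_indicator (measurableSet_half n),
    ← lintegral_indicator (isClosed_tsupport f).measurableSet]
  refine lintegral_mono fun ξ => ?_
  by_cases h : ξ ∈ tsupport f
  · simp [h, hs h]
  · have : f ξ = 0 := image_eq_zero_of_notMem_tsupport h
    simp [Set.indicator, this, Real.zero_rpow hp.ne']

/-- Displacements leaving the half-space: `f` vanishes at the endpoint. -/
lemma incr_far {n : ℕ} (hn : 0 < n) (p θ : ℝ) {f : Heis n → ℝ}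
    (hs : tsupport f ⊆ halfSpace n) {ζ : Heis n} (hζ : x1 ζ ≤ -1) :
    hardy p θ f ≤ incr p θ f ζ := by
  refine (setLIntegral_congr_fun (measurableSet_half n) fun ξ hξ => ?_).le
  have : f (shift ξ ζ) = 0 := by
    refine image_eq_zero_of_notMem_tsupport fun h => ?_
    have h1 : 0 < x1 (shift ξ ζ) := hs h
    rw [x1_shift hn] at h1
    have h2 : 0 < x1 ξ := hξ
    nlinarith
  simp [this]

/-- Displacements staying in the half-space: the shift scales `hardy` by a power of the factor
`λ = 1 + ζ₁` by which it moves `x₁`, because both `x₁` and the volume are scaled by `λ`. -/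
lemma hardy_shift {n : ℕ} (hn : 0 < n) {p θ : ℝ} {f : Heis n → ℝ} (hf : Continuous f)
    {ζ : Heis n} (hζ : 0 < 1 + x1 ζ) :
    ∫⁻ ξ in halfSpace n, ENNReal.ofReal (|f (shift ξ ζ)| ^ p / x1 ξ ^ θ) =
      ENNReal.ofReal ((1 + x1 ζ) ^ (θ - 1)) * hardy p θ f := by
  have h3 : Measurable (x1 : Heis n → ℝ) := continuous_x1.measurable
  have h2 := hf.measurable
  have hm : Measurable ((halfSpace n).indicator fun ξ : Heis n =>
      ENNReal.ofReal (|f ξ| ^ p / x1 ξ ^ θ)) :=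
    Measurable.indicator (by fun_prop) (measurableSet_half n)
  have h := (mp_shift hn ζ hζ).lintegral_comp hm
  rw [lintegral_smul_measure, lintegral_indicator (measurableSet_half n)] at h
  have hpos : 0 < (1 + x1 ζ) ^ θ := by positivity
  rw [← lintegral_indicator (measurableSet_half n), Real.rpow_sub_one hζ.ne', div_eq_mul_inv,
    ENNReal.ofReal_mul hpos.le, mul_assoc, hardy, ← smul_eq_mul (ENNReal.ofReal _⁻¹), ← h,
    ← lintegral_const_mul' _ _ ENNReal.ofReal_ne_top]
  congr 1
  ext ξ
  by_cases hξ : ξ ∈ halfSpace n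
  · have h0 : 0 < x1 ξ := hξ
    have h1 : shift ξ ζ ∈ halfSpace n := by
      change 0 < x1 (shift ξ ζ)
      rw [x1_shift hn]; positivity
    rw [Set.indicator_of_mem hξ, Set.indicator_of_mem h1, ← ENNReal.ofReal_mul hpos.le,
      x1_shift hn, Real.mul_rpow hζ.le h0.le]
    congr 1
    field_simp
  · have h1 : shift ξ ζ ∉ halfSpace n := by
      change ¬ 0 < x1 (shift ξ ζ)
      have h0 : ¬ 0 < x1 ξ := hξ
      rw [x1_shift hn]
      nlinarith
    simp [hξ, h1]

/-- Minkowski's inequality between `f` and its shift: the norm of the shifted function is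
`λ^((θ-1)/p)` times that of `f`, where `λ = 1 + ζ₁`. -/
lemma incr_near {n : ℕ} (hn : 0 < n) {p θ : ℝ} (hp : 1 ≤ p) {f : Heis n → ℝ}
    (hf : Continuous f) (hH : hardy p θ f < ⊤) {ζ : Heis n} (hζ : 0 < 1 + x1 ζ)
    {c : ℝ} (hc : 0 ≤ c) (hcl : c ≤ 1 - (1 + x1 ζ) ^ ((θ - 1) / p)) :
    ENNReal.ofReal (c ^ p) * hardy p θ f ≤ incr p θ f ζ := by
  have hp0 : 0 < p := by linarith
  have h3 : Measurable (x1 : Heis n → ℝ) := continuous_x1.measurable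
  have h2 := hf.measurable
  have h1 : Measurable fun ξ : Heis n => f (shift ξ ζ) := by
    have : Continuous fun ξ : Heis n => f (shift ξ ζ) := by
      have : Continuous fun ξ : Heis n => shift ξ ζ := by fun_prop
      exact hf.comp this
    exact this.measurable
  -- On the half-space, `|v|^p / x₁^θ` is the `p`-th power of `|v| / x₁^(θ/p)`.
  have key : ∀ (v : ℝ) (ξ : Heis n), ξ ∈ halfSpace n →
      ENNReal.ofReal (|v| ^ p / x1 ξ ^ θ) = ENNReal.ofReal (|v| / x1 ξ ^ (θ / p)) ^ p := by
    intro v ξ hξ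
    have h0 : 0 < x1 ξ := hξ
    rw [ENNReal.ofReal_rpow_of_nonneg (by positivity) hp0.le,
      Real.div_rpow (abs_nonneg _) (by positivity), ← Real.rpow_mul h0.le, div_mul_cancel₀ _ hp0.ne']
  set u : Heis n → ℝ≥0∞ := fun ξ => ENNReal.ofReal (|f ξ - f (shift ξ ζ)| / x1 ξ ^ (θ / p))
  set v : Heis n → ℝ≥0∞ := fun ξ => ENNReal.ofReal (|f (shift ξ ζ)| / x1 ξ ^ (θ / p))
  have hu : Measurable u := by fun_prop
  have hv : Measurable v := by fun_prop
  have hI : incr p θ f ζ = ∫⁻ ξ in halfSpace n, u ξ ^ p :=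
    setLIntegral_congr_fun (measurableSet_half n) fun ξ hξ => key _ ξ hξ
  have hV : ∫⁻ ξ in halfSpace n, v ξ ^ p =
      ENNReal.ofReal ((1 + x1 ζ) ^ (θ - 1)) * hardy p θ f := by
    rw [← hardy_shift hn hf hζ]
    exact setLIntegral_congr_fun (measurableSet_half n) fun ξ hξ => (key _ ξ hξ).symm
  have hHle : hardy p θ f ≤ ∫⁻ ξ in halfSpace n, (u + v) ξ ^ p := by
    refine setLIntegral_mono' (measurableSet_half n) fun ξ hξ => ?_
    rw [key _ ξ hξ]
    have h0 : 0 < x1 ξ := hξ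
    gcongr
    simp only [Pi.add_apply, u, v]
    rw [← ENNReal.ofReal_add (by positivity) (by positivity), ← add_div]
    gcongr
    calc |f ξ| = |(f ξ - f (shift ξ ζ)) + f (shift ξ ζ)| := by ring_nf
      _ ≤ _ := abs_add_le _ _
  have hmink := ENNReal.lintegral_Lp_add_le (μ := volume.restrict (halfSpace n))
    hu.aemeasurable hv.aemeasurable hp
  rw [← hI, hV] at hmink
  have hpinv : (0:ℝ) ≤ 1 / p := by positivity
  have hmain : hardy p θ f ^ (1 / p) ≤ incr p θ f ζ ^ (1 / p) +
      ENNReal.ofReal ((1 + x1 ζ) ^ ((θ - 1) / p)) * hardy p θ f ^ (1 / p) := by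
    refine (ENNReal.rpow_le_rpow hHle hpinv).trans (hmink.trans_eq ?_)
    rw [ENNReal.mul_rpow_of_nonneg _ _ hpinv, ENNReal.ofReal_rpow_of_nonneg (by positivity) hpinv,
      ← Real.rpow_mul hζ.le, mul_one_div]
  set N := hardy p θ f ^ (1 / p) with hN
  have hNtop : N ≠ ⊤ := ENNReal.rpow_ne_top_of_nonneg hpinv hH.ne
  set l := (1 + x1 ζ) ^ ((θ - 1) / p)
  have hl : 0 ≤ l := by positivity
  have hcN : ENNReal.ofReal c * N ≤ incr p θ f ζ ^ (1 / p) := by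
    have h5 : ENNReal.ofReal c * N + ENNReal.ofReal l * N ≤
        incr p θ f ζ ^ (1 / p) + ENNReal.ofReal l * N := by
      refine le_trans ?_ hmain
      rw [← add_mul, ← ENNReal.ofReal_add hc hl]
      calc _ ≤ ENNReal.ofReal 1 * N := by gcongr; linarith
        _ = N := by simp
    exact (ENNReal.add_le_add_iff_right (ENNReal.mul_ne_top ENNReal.ofReal_ne_top hNtop)).1 h5
  have := ENNReal.rpow_le_rpow hcN hp0.le
  rw [ENNReal.mul_rpow_of_nonneg _ _ hp0.le, ENNReal.ofReal_rpow_of_nonneg hc hp0.le, hN,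
    ← ENNReal.rpow_mul, ← ENNReal.rpow_mul, one_div_mul_cancel hp0.ne', ENNReal.rpow_one,
    ENNReal.rpow_one] at this
  exact this

/-! ### Integrating the kernel over dyadic scales -/

/-- The set of displacements of size comparable to `r` all of whose horizontal coordinates
lie in `(-2r, -r]`. -/
def box (n : ℕ) (r : ℝ) : Set (Heis n) :=
  Set.pi Set.univ (fun _ => Set.Ioc (-(2 * r)) (-r)) ×ˢ
    Set.pi Set.univ (fun _ => Set.Ioc (-(2 * r)) (-r)) ×ˢ Set.Ioc 0 (r ^ 2)

lemma measurableSet_box (n : ℕ) (r : ℝ) : MeasurableSet (box n r) :=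
  (MeasurableSet.univ_pi fun _ => measurableSet_Ioc).prod
    ((MeasurableSet.univ_pi fun _ => measurableSet_Ioc).prod measurableSet_Ioc)

lemma volume_box (n : ℕ) {r : ℝ} (hr : 0 < r) :
    volume (box n r) = ENNReal.ofReal (r ^ (2 * n + 2)) := by
  rw [box, Measure.volume_eq_prod, Measure.prod_prod, Measure.volume_eq_prod, Measure.prod_prod,
    volume_pi_pi]
  simp only [Real.volume_Ioc, Finset.prod_const, Finset.card_univ, Fintype.card_fin]
  rw [← ENNReal.ofReal_pow (by linarith), ← ENNReal.ofReal_mul (by ring_nf; positivity),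
    ← ENNReal.ofReal_mul (by ring_nf; positivity)]
  congr 1
  ring

lemma x1_box {n : ℕ} (hn : 0 < n) {r : ℝ} {ζ : Heis n} (h : ζ ∈ box n r) :
    x1 ζ ∈ Set.Ioc (-(2 * r)) (-r) := by
  rw [x1_eq hn]
  exact h.1 _ (Set.mem_univ _)

lemma ker_box {n : ℕ} (hn : 0 < n) {p s α : ℝ} (hp : 0 < p) (hs0 : 0 < s) (hs1 : s < 1)
    (hα : 0 ≤ α) {r : ℝ} (hr : 0 < r) {ζ : Heis n} (h : ζ ∈ box n r) :
    ((8 * n + 1 : ℝ) ^ (hQ n + p + α))⁻¹ * (r ^ (2 * n + 2) * r ^ (s * p + α))⁻¹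
      ≤ ker p s α ζ := by
  have hsq : ∀ v : ℝ, v ∈ Set.Ioc (-(2 * r)) (-r) → v ^ 2 ≤ 4 * r ^ 2 := by
    intro v hv
    nlinarith [hv.1, hv.2]
  have hz : zsq ζ ≤ 8 * n * r ^ 2 := by
    have h1 : ∑ i, ζ.1 i ^ 2 ≤ ∑ _i : Fin n, 4 * r ^ 2 :=
      Finset.sum_le_sum fun i _ => hsq _ (h.1 i (Set.mem_univ _))
    have h2 : ∑ i, ζ.2.1 i ^ 2 ≤ ∑ _i : Fin n, 4 * r ^ 2 :=
      Finset.sum_le_sum fun i _ => hsq _ (h.2.1 i (Set.mem_univ _))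
    simp only [Finset.sum_const, Finset.card_univ, Fintype.card_fin, nsmul_eq_mul] at h1 h2
    unfold zsq
    linarith
  have hzpos : 0 < zsq ζ := by
    have h1 : ζ.1 ⟨0, hn⟩ ^ 2 ≤ ∑ i, ζ.1 i ^ 2 :=
      Finset.single_le_sum (f := fun i => ζ.1 i ^ 2) (fun i _ => sq_nonneg _) (Finset.mem_univ _)
    have h2 : 0 ≤ ∑ i, ζ.2.1 i ^ 2 := Finset.sum_nonneg fun i _ => sq_nonneg _
    have h3 := (h.1 ⟨0, hn⟩ (Set.mem_univ _)).2
    unfold zsq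
    nlinarith
  have ht0 := h.2.2.1
  have ht1 := h.2.2.2
  set M : ℝ := 8 * n + 1 with hM
  have hn0 : (0 : ℝ) ≤ n := Nat.cast_nonneg n
  have hM1 : 1 ≤ M := by linarith
  have hMr : 0 < M * r := by positivity
  have hzle : zsq ζ ≤ (M * r) ^ 2 := by
    refine hz.trans ?_
    rw [mul_pow]
    gcongr
    nlinarith
  have hznorm : znorm ζ ≤ M * r := Real.sqrt_le_iff.2 ⟨hMr.le, hzle⟩
  have hdle : hd ζ ≤ M * r := by
    have h1 : zsq ζ ^ 2 + ζ.2.2 ^ 2 ≤ (M * r) ^ 4 := by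
      have h2 : zsq ζ ^ 2 ≤ (8 * n * r ^ 2) ^ 2 := by gcongr
      have h3 : ζ.2.2 ^ 2 ≤ (r ^ 2) ^ 2 := by gcongr
      have h4 : (M ^ 2) * r ^ 4 ≤ M ^ 4 * r ^ 4 := by
        gcongr
        norm_num
      have h5 : ((8 * n) ^ 2 + 1) * r ^ 4 ≤ M ^ 2 * r ^ 4 := by
        gcongr
        nlinarith
      calc _ ≤ (8 * n * r ^ 2) ^ 2 + (r ^ 2) ^ 2 := add_le_add h2 h3
        _ = ((8 * n) ^ 2 + 1) * r ^ 4 := by ring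
        _ ≤ M ^ 4 * r ^ 4 := h5.trans h4
        _ = _ := by ring
    calc hd ζ ≤ ((M * r) ^ 4) ^ ((1 : ℝ) / 4) :=
          Real.rpow_le_rpow (by positivity) h1 (by norm_num)
      _ = M * r := by
        rw [← Real.rpow_natCast, ← Real.rpow_mul hMr.le]
        norm_num
  have hdpos : 0 < hd ζ := Real.rpow_pos_of_pos (by positivity) _
  have hzn : 0 < znorm ζ := Real.sqrt_pos.2 hzpos
  have hQ0 : 0 ≤ hQ n := by unfold hQ; positivity
  rw [ker, ← mul_inv]
  refine inv_anti₀ (by positivity) ?_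
  have hrQ : (r : ℝ) ^ (2 * n + 2) = r ^ (hQ n) := by
    rw [hQ, ← Real.rpow_natCast]; push_cast; rfl
  calc hd ζ ^ (hQ n + s * p) * znorm ζ ^ α
      ≤ (M * r) ^ (hQ n + s * p) * (M * r) ^ α := by gcongr
    _ = M ^ (hQ n + s * p + α) * (r ^ (2 * n + 2) * r ^ (s * p + α)) := by
        rw [Real.mul_rpow (by positivity) hr.le, Real.mul_rpow (by positivity) hr.le, hrQ,
          Real.rpow_add hr (hQ n), Real.rpow_add hr (s * p), Real.rpow_add (by positivity : 0 < M) _ α]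
        ring
    _ ≤ M ^ (hQ n + p + α) * (r ^ (2 * n + 2) * r ^ (s * p + α)) := by
        gcongr
        nlinarith

/-- The lower bound for the average of the increments obtained by splitting the displacements
into dyadic scales `r = 2^(e k)`. -/
lemma sum_le {n : ℕ} (hn : 0 < n) {p s α : ℝ} (hp : 0 < p) (hs0 : 0 < s) (hs1 : s < 1)
    (hα : 0 ≤ α) (f : Heis n → ℝ) {e : ℕ → ℤ} (he : Function.Injective e) {c : ℕ → ℝ}
    (hc0 : ∀ k, 0 ≤ c k)
    (hc : ∀ k, ∀ ζ ∈ box n ((2 : ℝ) ^ e k),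
      ENNReal.ofReal (c k) * hardy p (s * p + α) f ≤ incr p (s * p + α) f ζ) :
    (∑' k, ENNReal.ofReal (((8 * n + 1 : ℝ) ^ (hQ n + p + α))⁻¹ *
        (c k * (((2 : ℝ) ^ e k) ^ (s * p + α))⁻¹))) * hardy p (s * p + α) f ≤
      ∫⁻ ζ, ENNReal.ofReal (ker p s α ζ) * incr p (s * p + α) f ζ := by
  have hdisj : Pairwise (Function.onFun Disjoint fun k => box n ((2 : ℝ) ^ e k)) := by
    have aux : ∀ i j : ℕ, e i < e j → Disjoint (box n ((2 : ℝ) ^ e i)) (box n ((2 : ℝ) ^ e j)) := by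
      intro i j hij
      rw [Set.disjoint_left]
      intro ζ hi hj
      have h1 := (x1_box hn hi).1
      have h2 := (x1_box hn hj).2
      have h3 : (2 : ℝ) ^ (e i + 1) ≤ 2 ^ e j := zpow_le_zpow_right₀ (by norm_num) hij
      rw [zpow_add_one₀ (by norm_num)] at h3
      linarith
    intro i j hij
    rcases lt_or_gt_of_ne (he.ne hij) with h | h
    · exact aux i j h
    · exact (aux j i h).symm
  refine le_trans ?_ (setLIntegral_le_lintegral (⋃ k, box n ((2 : ℝ) ^ e k)) _)
  rw [lintegral_iUnion (fun k => measurableSet_box n _) hdisj, ← ENNReal.tsum_mul_right]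
  refine ENNReal.tsum_le_tsum fun k => ?_
  have hr : (0 : ℝ) < 2 ^ e k := by positivity
  set r : ℝ := 2 ^ e k
  set κ : ℝ := ((8 * n + 1 : ℝ) ^ (hQ n + p + α))⁻¹ with hκ
  have hκ0 : 0 ≤ κ := by positivity
  calc ENNReal.ofReal (κ * (c k * (r ^ (s * p + α))⁻¹)) * hardy p (s * p + α) f
      = ∫⁻ _ζ in box n r, ENNReal.ofReal (κ * (r ^ (2 * n + 2) * r ^ (s * p + α))⁻¹) *
          (ENNReal.ofReal (c k) * hardy p (s * p + α) f) := by
        rw [setLIntegral_const, volume_box n hr, ← mul_assoc (ENNReal.ofReal _) (ENNReal.ofReal _),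
          ← ENNReal.ofReal_mul (by positivity), mul_right_comm,
          ← ENNReal.ofReal_mul (mul_nonneg (by positivity) (hc0 k))]
        congr 2
        have : 0 < r ^ (s * p + α) := by positivity
        field_simp
    _ ≤ _ := by
        refine setLIntegral_mono' (measurableSet_box n r) fun ζ hζ => ?_
        exact mul_le_mul' (ENNReal.ofReal_le_ofReal (ker_box hn hp hs0 hs1 hα hr hζ)) (hc k ζ hζ)

/-- `∑ 2^{-kx} ≥ 1/x`. -/
lemma geom_le {x : ℝ} (hx : 0 < x) :
    Summable (fun k : ℕ => ((2 : ℝ) ^ (-x)) ^ k) ∧ x⁻¹ ≤ ∑' k : ℕ, ((2 : ℝ) ^ (-x)) ^ k := by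
  have h0 : (0 : ℝ) ≤ 2 ^ (-x) := by positivity
  have h1 : (2 : ℝ) ^ (-x) < 1 := Real.rpow_lt_one_of_one_lt_of_neg (by norm_num) (by linarith)
  refine ⟨summable_geometric_of_lt_one h0 h1, ?_⟩
  rw [tsum_geometric_of_lt_one h0 h1]
  refine inv_anti₀ (by linarith) ?_
  -- `1 - 2^{-x} ≤ x log 2 ≤ x`
  have h2 : (2 : ℝ) ^ (-x) = Real.exp (Real.log 2 * (-x)) := Real.rpow_def_of_pos (by norm_num) _
  have h3 := Real.add_one_le_exp (Real.log 2 * (-x))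
  have h4 : Real.log 2 ≤ 1 := by linarith [Real.log_le_sub_one_of_pos (show (0:ℝ) < 2 by norm_num)]
  rw [h2]
  nlinarith

lemma le_tsum_geom {A x : ℝ} (hA : 0 ≤ A) (hx : 0 < x) {g : ℕ → ℝ}
    (hg : ∀ k, A * ((2 : ℝ) ^ (-x)) ^ k ≤ g k) :
    ENNReal.ofReal (A * x⁻¹) ≤ ∑' k, ENNReal.ofReal (g k) := by
  obtain ⟨h1, h2⟩ := geom_le hx
  calc ENNReal.ofReal (A * x⁻¹) ≤ ENNReal.ofReal (∑' k : ℕ, A * ((2 : ℝ) ^ (-x)) ^ k) := by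
        rw [tsum_mul_left]
        exact ENNReal.ofReal_le_ofReal (by gcongr)
    _ = ∑' k : ℕ, ENNReal.ofReal (A * ((2 : ℝ) ^ (-x)) ^ k) :=
        ENNReal.ofReal_tsum_of_nonneg (fun k => by positivity) (h1.mul_left A)
    _ ≤ _ := ENNReal.tsum_le_tsum fun k => ENNReal.ofReal_le_ofReal (hg k)

/-- Displacements that leave the half-space produce the factor `1 / (sp + α)`. -/
lemma far_bound {n : ℕ} (hn : 0 < n) {p s α : ℝ} (hp : 0 < p) (hs0 : 0 < s) (hs1 : s < 1)
    (hα : 0 ≤ α) {f : Heis n → ℝ} (hs : tsupport f ⊆ halfSpace n) :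
    ENNReal.ofReal (((8 * n + 1 : ℝ) ^ (hQ n + p + α))⁻¹ * (s * p + α)⁻¹) *
        hardy p (s * p + α) f ≤
      ∫⁻ ζ, ENNReal.ofReal (ker p s α ζ) * incr p (s * p + α) f ζ := by
  have hθ : 0 < s * p + α := by positivity
  refine le_trans ?_ (sum_le hn hp hs0 hs1 hα f (e := fun k => (k : ℤ)) Nat.cast_injective
    (c := fun _ => 1) (fun _ => zero_le_one) ?_)
  · gcongr
    refine le_tsum_geom (by positivity) hθ fun k => le_of_eq ?_
    rw [one_mul, zpow_natCast, Real.rpow_neg (by norm_num), inv_pow, ← Real.rpow_natCast,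
      ← Real.rpow_natCast, ← Real.rpow_mul (by norm_num), ← Real.rpow_mul (by norm_num),
      mul_comm (k : ℝ)]
  · intro k ζ hζ
    have h1 := (x1_box hn hζ).2
    have h2 : (1 : ℝ) ≤ 2 ^ (k : ℤ) := by
      rw [zpow_natCast]; exact one_le_pow₀ (by norm_num)
    simpa using incr_far hn p (s * p + α) hs (by linarith : x1 ζ ≤ -1)

/-- Small displacements produce the factor `1 / (p (1 - s))`. The weight `α ≥ 0` only helps
here, since at scale `r ≤ 1` it contributes `r^{-α} ≥ 1`. -/
lemma near_bound {n : ℕ} (hn : 0 < n) {p s α γ : ℝ} (hp : 1 < p) (hs0 : 0 < s) (hs1 : s < 1)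
    (hα : 0 ≤ α) (hγ0 : 0 < γ) (hγ1 : γ ≤ 1) (hγ : γ ≤ (s * p + α - 1) / p)
    {f : Heis n → ℝ} (hf : Continuous f) (hH : hardy p (s * p + α) f < ⊤) :
    ENNReal.ofReal (((8 * n + 1 : ℝ) ^ (hQ n + p + α))⁻¹ * (γ / 2) ^ p * (p * (1 - s))⁻¹) *
        hardy p (s * p + α) f ≤
      ∫⁻ ζ, ENNReal.ofReal (ker p s α ζ) * incr p (s * p + α) f ζ := by
  have hp0 : 0 < p := by linarith
  have hx : 0 < p * (1 - s) := mul_pos hp0 (by linarith)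
  refine le_trans ?_ (sum_le hn hp0 hs0 hs1 hα f (e := fun k => -((k : ℤ) + 1))
    (fun a b h => by simpa using h)
    (c := fun k => (γ * (2 : ℝ) ^ (-((k : ℤ) + 1))) ^ p) (fun _ => by positivity) ?_)
  · gcongr
    refine le_tsum_geom (by positivity) hx fun k => ?_
    rw [mul_assoc]
    refine mul_le_mul_of_nonneg_left ?_ (by positivity)
    have hr : ((2 : ℝ) ^ (-((k : ℤ) + 1))) = 2 ^ (-((k : ℝ) + 1)) := by
      rw [← Real.rpow_intCast]; push_cast; rfl
    rw [hr, Real.div_rpow hγ0.le (by norm_num), Real.mul_rpow hγ0.le (by positivity),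
      ← Real.rpow_natCast, ← Real.rpow_mul (by norm_num), ← Real.rpow_mul (by norm_num),
      ← Real.rpow_mul (by norm_num), ← Real.rpow_neg (by norm_num), div_eq_mul_inv,
      ← Real.rpow_neg (by norm_num)]
    simp only [mul_assoc]
    rw [← Real.rpow_add (by norm_num), ← Real.rpow_add (by norm_num)]
    refine mul_le_mul_of_nonneg_left
      (Real.rpow_le_rpow_of_exponent_le (by norm_num) ?_) (by positivity)
    have h1 : 0 ≤ (k : ℝ) * α := by positivity
    have h2 : 0 ≤ s * p := by positivity
    nlinarith
  · intro k ζ hζ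
    have hr : (0 : ℝ) < 2 ^ (-((k : ℤ) + 1)) := by positivity
    have hr2 : 2 * (2 : ℝ) ^ (-((k : ℤ) + 1)) ≤ 1 := by
      rw [zpow_neg, zpow_add_one₀ (by norm_num), zpow_natCast]
      have : (1 : ℝ) ≤ 2 ^ k := one_le_pow₀ (by norm_num)
      rw [← div_eq_mul_inv, div_le_one (by positivity)]
      linarith
    obtain ⟨h1, h2⟩ := x1_box hn hζ
    set r : ℝ := 2 ^ (-((k : ℤ) + 1))
    have hl : 0 < 1 + x1 ζ := by linarith
    refine incr_near hn hp.le hf hH hl (by positivity) ?_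
    have h3 : (1 + x1 ζ) ^ ((s * p + α - 1) / p) ≤ (1 + x1 ζ) ^ γ :=
      Real.rpow_le_rpow_of_exponent_ge hl (by linarith) hγ
    have h4 : (1 + x1 ζ) ^ γ ≤ 1 + γ * x1 ζ :=
      rpow_one_add_le_one_add_mul_self (by linarith) hγ0.le hγ1
    nlinarith

end HeisHardy

/-! ### The Hardy inequality -/

/-- Theorem 1.2: weighted fractional Hardy inequality on the half-space
of `ℍⁿ`, with a constant `C = C(n,p,α) > 0` depending only on `n`, `p`, `α`. -/
theorem fractional_hardy_halfspace_weighted (n : ℕ) (hn : 1 ≤ n) (p α : ℝ)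
    (hp1 : 1 < p) (hα : 0 ≤ α) :
    ∃ C : ℝ, 0 < C ∧ ∀ s : ℝ, 0 < s → s < 1 →
      ∀ f : Heis n → ℝ, ContDiff ℝ (⊤ : ℕ∞) f → HasCompactSupport f →
        tsupport f ⊆ halfSpace n →
        ENNReal.ofReal (C / ((s + α / p) * (1 - s))) *
            (∫⁻ ξ in halfSpace n, ENNReal.ofReal (|f ξ| ^ p / x1 ξ ^ (s * p + α))) ≤
          ∫⁻ ξ, ∫⁻ ξ', ENNReal.ofReal
            (|f ξ - f ξ'| ^ p /
              (hd (Hmul (Hinv ξ) ξ') ^ (hQ n + s * p) * zdist ξ ξ' ^ α)) := by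
  have hp0 : 0 < p := by linarith
  -- `s₀ ∈ (1/p, 1)` separates the two regimes, and `γ = s₀ - 1/p` bounds the exponent
  -- `(sp + α - 1)/p` from below when `s ≥ s₀`.
  have hpinv : p⁻¹ < 1 := inv_lt_one_of_one_lt₀ hp1
  have hpinv0 : 0 < p⁻¹ := by positivity
  set s₀ : ℝ := (1 + p⁻¹) / 2 with hs₀
  set γ : ℝ := (1 - p⁻¹) / 2 with hγ
  have hγ0 : 0 < γ := by linarith
  have hγ1 : γ ≤ 1 := by linarith
  set κ : ℝ := ((8 * n + 1 : ℝ) ^ (hQ n + p + α))⁻¹ with hκ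
  have hκ0 : 0 < κ := by positivity
  clear_value κ
  have hs₀0 : 0 < s₀ := by linarith
  have hs₀1 : 0 < 1 - s₀ := by linarith
  refine ⟨min (κ * p⁻¹ * (1 - s₀)) (κ * (γ / 2) ^ p * p⁻¹ * s₀), by positivity, ?_⟩
  intro s hs0 hs1 f hf hc hsupp
  refine le_trans ?_ (HeisHardy.incr_le p s α hf.continuous)
  change _ * HeisHardy.hardy p (s * p + α) f ≤ _
  have h1s : 0 < 1 - s := by linarith
  have hd0 : 0 < s + α / p := by positivity
  rcases le_total s s₀ with h | h
  · refine le_trans ?_ (HeisHardy.far_bound hn hp0 hs0 hs1 hα hsupp)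
    rw [← hκ]
    gcongr
    rw [div_le_iff₀ (by positivity)]
    refine (min_le_left _ _).trans ?_
    have : s * p + α = p * (s + α / p) := by field_simp
    rw [this, mul_inv]
    calc κ * p⁻¹ * (1 - s₀) ≤ κ * p⁻¹ * (1 - s) := by gcongr
      _ = _ := by field_simp
  · refine le_trans ?_ (HeisHardy.near_bound hn hp1 hs0 hs1 hα hγ0 hγ1 ?_ hf.continuous
      (HeisHardy.hardy_lt_top hp0 hf.continuous hc hsupp))
    · rw [← hκ]
      gcongr
      rw [div_le_iff₀ (by positivity)]
      refine (min_le_right _ _).trans ?_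
      have h2 : 0 ≤ α / p := by positivity
      calc κ * (γ / 2) ^ p * p⁻¹ * s₀ ≤ κ * (γ / 2) ^ p * p⁻¹ * (s + α / p) := by
            gcongr; linarith
        _ = _ := by field_simp
    · have h2 : 0 ≤ α / p := by positivity
      have h3 : (s * p + α - 1) / p = s + α / p - p⁻¹ := by field_simp
      rw [h3]
      linarith
end
end

section
/- Let n ≥ 1, 1 < p < ∞ and 0 < s < 1. There exists a constant C = C(n,p) > 0, depending only on n and p, such that for every ξ = (x₁,…,xₙ,y,t) ∈ ℍⁿ₊, ∫_{{ξ' ∈ ℍⁿ₊ : x₁' ≤ x₁}} |x₁ − x₁'|^p / d(ξ⁻¹∘ξ')^{Q+sp} dξ' ≥ (C/(1−s)) · x₁^{p−sp}. -/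
/-!
Left translation by `ξ⁻¹` preserves Lebesgue measure and lowers the first coordinate of `ξ'` by `x₁`,
so with `η = ξ⁻¹ ∘ ξ'` the integral concerns the points `η` with first coordinate in `(-x₁, 0]`, and
the integrand is `|η₁|^p / d(η)^{Q+sp}`. This region contains the disjoint boxes `shellBox n r`,
`r = x₁ / 2^{k+1}`, `k = 0, 1, …`: there all horizontal coordinates lie in `(-2r, -r]` and the
central one in `(0, r²]`. Such a box has volume `r^Q`, and on it `|η₁| ≥ r` while `d(η) ≤ M r` with
`M = 64 n² + 1`, so it contributes at least `M^{-(Q+p)} r^{p-sp}`. Summing the geometric series in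
`k` gives the factor `1 / (1 - 2^{-p(1-s)}) ≥ 1 / (p (1-s))`.
-/

open MeasureTheory Real Filter Topology ENNReal

noncomputable section

/-! ### Dyadic boxes and left translations -/

/-- A model dyadic box near the origin: horizontal coordinates in `(-2r, -r]`, central one in
`(0, r²]`.
All horizontal coordinates, not only the first, are kept away from `0`, so that the set is a
product box whose volume is exactly `r^Q`. -/
def shellBox (n : ℕ) (r : ℝ) : Set (Heis n) :=
  (Set.univ.pi fun _ => Set.Ioc (-(2 * r)) (-r)) ×ˢ
    ((Set.univ.pi fun _ => Set.Ioc (-(2 * r)) (-r)) ×ˢ Set.Ioc 0 (r ^ 2))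

lemma shellBox_measurable (n : ℕ) (r : ℝ) : MeasurableSet (shellBox n r) :=
  (MeasurableSet.univ_pi fun _ => measurableSet_Ioc).prod
    ((MeasurableSet.univ_pi fun _ => measurableSet_Ioc).prod measurableSet_Ioc)

lemma shellBox_volume (n : ℕ) {r : ℝ} (hr : 0 < r) :
    volume (shellBox n r) = ENNReal.ofReal (r ^ hQ n) := by
  have h1 : volume (Set.univ.pi fun _ : Fin n => Set.Ioc (-(2 * r)) (-r))
      = ENNReal.ofReal (r ^ n) := by
    rw [volume_pi_pi]
    simp only [Real.volume_Ioc, Finset.prod_const, Finset.card_univ, Fintype.card_fin]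
    rw [← ENNReal.ofReal_pow (by linarith)]
    congr 2
    ring
  have h2 : r ^ hQ n = r ^ n * (r ^ n * r ^ 2) := by
    have : hQ n = ((n + (n + 2) : ℕ) : ℝ) := by
      simp only [hQ]
      push_cast
      ring
    rw [this, Real.rpow_natCast, pow_add, pow_add]
  unfold shellBox
  rw [Measure.volume_eq_prod, Measure.prod_prod, Measure.volume_eq_prod, Measure.prod_prod, h1,
    Real.volume_Ioc, h2, ENNReal.ofReal_mul (by positivity), ENNReal.ofReal_mul (by positivity),
    sub_zero]

/-- Left translations are iterated skew products of Euclidean translations, hence preserve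
Lebesgue measure. -/
lemma measurePreserving_Hmul {n : ℕ} (a : Heis n) :
    MeasurePreserving (Hmul a) (volume : Measure (Heis n)) volume := by
  have inner (x : Fin n → ℝ) : MeasurePreserving
      (fun q : (Fin n → ℝ) × ℝ => (a.2.1 + q.1,
        a.2.2 + q.2 + 2 * (∑ i, a.2.1 i * x i) - 2 * (∑ i, a.1 i * q.1 i)))
      (volume : Measure ((Fin n → ℝ) × ℝ)) volume := by
    refine (measurePreserving_add_left volume a.2.1).skew_product
      (g := fun y t => a.2.2 + t + 2 * (∑ i, a.2.1 i * x i) - 2 * (∑ i, a.1 i * y i)) ?_ ?_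
    · unfold Function.uncurry
      fun_prop
    · refine Eventually.of_forall fun y => ?_
      have : (fun t : ℝ => a.2.2 + t + 2 * (∑ i, a.2.1 i * x i) - 2 * (∑ i, a.1 i * y i))
          = fun t => (a.2.2 + 2 * (∑ i, a.2.1 i * x i) - 2 * (∑ i, a.1 i * y i)) + t := by
        funext t
        ring
      rw [this]
      exact (measurePreserving_add_left volume _).map_eq
  refine (measurePreserving_add_left volume a.1).skew_product
    (g := fun x (q : (Fin n → ℝ) × ℝ) => (a.2.1 + q.1,
        a.2.2 + q.2 + 2 * (∑ i, a.2.1 i * x i) - 2 * (∑ i, a.1 i * q.1 i))) ?_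
    (Eventually.of_forall fun x => (inner x).map_eq)
  unfold Function.uncurry
  fun_prop

lemma x1_Hmul_Hinv {n : ℕ} (a b : Heis n) : x1 (Hmul (Hinv a) b) = x1 b - x1 a := by
  unfold x1 Hmul Hinv
  split_ifs
  · simp
    ring
  · simp

lemma x1_mem_of_mem_shellBox {n : ℕ} (hn : 1 ≤ n) {r : ℝ} {η : Heis n} (h : η ∈ shellBox n r) :
    -(2 * r) < x1 η ∧ x1 η ≤ -r := by
  have := h.1 ⟨0, hn⟩ (Set.mem_univ _)
  simpa [x1, show 0 < n from hn] using this

lemma hd_le_of_mem_shellBox {n : ℕ} {r : ℝ} (hr : 0 < r) {η : Heis n}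
    (h : η ∈ shellBox n r) : hd η ≤ (64 * (n : ℝ) ^ 2 + 1) * r := by
  have key (u : ℝ) (hu : u ∈ Set.Ioc (-(2 * r)) (-r)) : u ^ 2 ≤ 4 * r ^ 2 := by
    nlinarith [hu.1, hu.2]
  have hx : ∑ i, (η.1 i) ^ 2 ≤ n * (4 * r ^ 2) := by
    refine (Finset.sum_le_sum fun i _ => key _ (h.1 i (Set.mem_univ _))).trans_eq ?_
    simp
  have hy : ∑ i, (η.2.1 i) ^ 2 ≤ n * (4 * r ^ 2) := by
    refine (Finset.sum_le_sum fun i _ => key _ (h.2.1 i (Set.mem_univ _))).trans_eq ?_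
    simp
  have hz0 : 0 ≤ zsq η := by unfold zsq; positivity
  have hz : zsq η ≤ 8 * n * r ^ 2 := by unfold zsq; linarith
  have hz2 : (zsq η) ^ 2 ≤ (8 * n * r ^ 2) ^ 2 := by gcongr
  have ht : (η.2.2) ^ 2 ≤ (r ^ 2) ^ 2 := by
    have := h.2.2
    gcongr
    · exact this.1.le
    · exact this.2
  set M : ℝ := 64 * (n : ℝ) ^ 2 + 1 with hM
  have hM1 : 1 ≤ M := by rw [hM]; nlinarith [sq_nonneg (n : ℝ)]
  have h4 : (zsq η) ^ 2 + (η.2.2) ^ 2 ≤ (M * r) ^ 4 := by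
    calc (zsq η) ^ 2 + (η.2.2) ^ 2 ≤ M * r ^ 4 := by rw [hM]; nlinarith
      _ ≤ M ^ 4 * r ^ 4 := by
        gcongr
        exact le_self_pow₀ hM1 (by norm_num)
      _ = (M * r) ^ 4 := by ring
  unfold hd
  calc ((zsq η) ^ 2 + (η.2.2) ^ 2) ^ ((1 : ℝ) / 4) ≤ ((M * r) ^ 4) ^ ((1 : ℝ) / 4) := by gcongr
    _ = M * r := by
      rw [← Real.rpow_natCast, ← Real.rpow_mul (by positivity)]
      norm_num

lemma hd_pos_of_mem_shellBox {n : ℕ} {r : ℝ} {η : Heis n}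
    (h : η ∈ shellBox n r) : 0 < hd η := by
  have : 0 < (η.2.2) ^ 2 := by
    have := h.2.2.1
    positivity
  unfold hd
  positivity

/-! ### Contribution of one scale and summation over scales -/

/-- The translated box of size `r` contributes at least a constant times `r^{p-sp}`, because its
volume `r^Q` cancels the factor `d^Q` of the kernel. -/
lemma shell_lower_bound {n : ℕ} (hn : 1 ≤ n) {p s r : ℝ} (hp : 0 < p) (hs0 : 0 < s) (hs : s < 1)
    (hr : 0 < r) (ξ : Heis n) :
    ENNReal.ofReal ((64 * (n : ℝ) ^ 2 + 1) ^ (-(hQ n + p)) * r ^ (p - s * p)) ≤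
      ∫⁻ ξ' in Hmul (Hinv ξ) ⁻¹' shellBox n r,
        ENNReal.ofReal (|x1 ξ - x1 ξ'| ^ p / hd (Hmul (Hinv ξ) ξ') ^ (hQ n + s * p)) := by
  set M : ℝ := 64 * (n : ℝ) ^ 2 + 1 with hM
  have hM1 : 1 ≤ M := by rw [hM]; nlinarith [sq_nonneg (n : ℝ)]
  have hM0 : 0 < M := by linarith
  have hQ0 : 0 < hQ n := by unfold hQ; positivity
  have hmp := measurePreserving_Hmul (Hinv ξ)
  have hvol : volume (Hmul (Hinv ξ) ⁻¹' shellBox n r) = ENNReal.ofReal (r ^ hQ n) := by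
    rw [hmp.measure_preimage (shellBox_measurable n r).nullMeasurableSet, shellBox_volume n hr]
  calc ENNReal.ofReal (M ^ (-(hQ n + p)) * r ^ (p - s * p))
      = ENNReal.ofReal (M ^ (-(hQ n + p)) * r ^ (p - s * p - hQ n)) *
          volume (Hmul (Hinv ξ) ⁻¹' shellBox n r) := by
        rw [hvol, ← ENNReal.ofReal_mul (by positivity), mul_assoc, ← Real.rpow_add hr,
          sub_add_cancel]
    _ = ∫⁻ _ in Hmul (Hinv ξ) ⁻¹' shellBox n r,
          ENNReal.ofReal (M ^ (-(hQ n + p)) * r ^ (p - s * p - hQ n)) :=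
        (setLIntegral_const _ _).symm
    _ ≤ _ := by
        refine setLIntegral_mono' (hmp.measurable (shellBox_measurable n r)) fun ξ' hξ' => ?_
        refine ENNReal.ofReal_le_ofReal ?_
        have hd0 := hd_pos_of_mem_shellBox hξ'
        have hdle := hd_le_of_mem_shellBox hr hξ'
        have hx := x1_mem_of_mem_shellBox hn hξ'
        rw [x1_Hmul_Hinv] at hx
        have habs : r ≤ |x1 ξ - x1 ξ'| := le_trans (by linarith [hx.2]) (le_abs_self _)
        calc M ^ (-(hQ n + p)) * r ^ (p - s * p - hQ n)
            ≤ M ^ (-(hQ n + s * p)) * r ^ (p - s * p - hQ n) := by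
              gcongr ?_ * _
              exact Real.rpow_le_rpow_of_exponent_le hM1 (by nlinarith)
          _ = r ^ p / (M * r) ^ (hQ n + s * p) := by
              rw [Real.mul_rpow hM0.le hr.le, Real.rpow_neg hM0.le,
                show p - s * p - hQ n = p - (hQ n + s * p) by ring, Real.rpow_sub hr]
              field_simp
          _ ≤ |x1 ξ - x1 ξ'| ^ p / hd (Hmul (Hinv ξ) ξ') ^ (hQ n + s * p) := by
              gcongr

/-- The geometric series over the dyadic scales, with `θ = p (1 - s)`; the bound uses
`1 - 2^{-θ} ≤ θ log 2 ≤ θ`. -/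
lemma dyadic_sum_lower_bound {h θ : ℝ} (hh : 0 < h) (hθ : 0 < θ) :
    Summable (fun k : ℕ => (h / 2 ^ (k + 1)) ^ θ) ∧
      2 ^ (-θ) * h ^ θ / θ ≤ ∑' k : ℕ, (h / 2 ^ (k + 1)) ^ θ := by
  set q : ℝ := 2 ^ (-θ) with hq
  have hq0 : 0 < q := by positivity
  have hq1 : q < 1 := Real.rpow_lt_one_of_one_lt_of_neg (by norm_num) (by linarith)
  have hterm (k : ℕ) : (h / 2 ^ (k + 1)) ^ θ = q * h ^ θ * q ^ k := by
    rw [Real.div_rpow hh.le (by positivity), ← Real.rpow_natCast, ← Real.rpow_mul (by norm_num),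
      mul_comm _ θ, Real.rpow_mul (by norm_num), Real.rpow_natCast, hq, Real.rpow_neg (by norm_num)]
    have : ((2 : ℝ) ^ θ) ≠ 0 := by positivity
    rw [inv_pow]
    field_simp
    rw [pow_succ']
  have hsum := (summable_geometric_of_lt_one hq0.le hq1).mul_left (q * h ^ θ)
  have hlog : 1 - q ≤ θ := by
    have h1 : Real.log 2 * (-θ) + 1 ≤ q := by
      rw [hq, Real.rpow_def_of_pos (by norm_num)]
      exact Real.add_one_le_exp _
    have h2 : Real.log 2 ≤ 1 := by linarith [Real.log_two_lt_d9]
    nlinarith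
  simp_rw [hterm]
  refine ⟨hsum, ?_⟩
  rw [tsum_mul_left, tsum_geometric_of_lt_one hq0.le hq1, div_eq_mul_inv]
  have : 0 < 1 - q := by linarith
  gcongr

/-- Lemma 3.2: lower bound for the truncated kernel integral
of the distance function, with `C = C(n,p)` depending only on `n` and `p`. -/
theorem distance_kernel_lower_bound (n : ℕ) (hn : 1 ≤ n) (p : ℝ) (hp1 : 1 < p) :
    ∃ C : ℝ, 0 < C ∧ ∀ s : ℝ, 0 < s → s < 1 →
      ∀ ξ : Heis n, ξ ∈ halfSpace n →
        ENNReal.ofReal (C / (1 - s) * x1 ξ ^ (p - s * p)) ≤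
          ∫⁻ ξ' in {ξ' ∈ halfSpace n | x1 ξ' ≤ x1 ξ},
            ENNReal.ofReal (|x1 ξ - x1 ξ'| ^ p / hd (Hmul (Hinv ξ) ξ') ^ (hQ n + s * p)) := by
  have hp : 0 < p := by linarith
  set M : ℝ := 64 * (n : ℝ) ^ 2 + 1 with hM
  have hM0 : 0 < M := by positivity
  refine ⟨M ^ (-(hQ n + p)) * 2 ^ (-p) / p, by positivity, fun s hs0 hs1 ξ hξ => ?_⟩
  have hh : 0 < x1 ξ := hξ
  have h1s : 0 < 1 - s := by linarith
  have hθ : 0 < p - s * p := by nlinarith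
  obtain ⟨hsum, hle⟩ := dyadic_sum_lower_bound hh hθ
  set r : ℕ → ℝ := fun k => x1 ξ / 2 ^ (k + 1) with hr
  have hr0 (k : ℕ) : 0 < r k := by positivity
  have hmeas (k : ℕ) : MeasurableSet (Hmul (Hinv ξ) ⁻¹' shellBox n (r k)) :=
    (measurePreserving_Hmul (Hinv ξ)).measurable (shellBox_measurable n _)
  have hdisj : Pairwise
      (Function.onFun Disjoint fun k => Hmul (Hinv ξ) ⁻¹' shellBox n (r k)) := by
    refine (pairwise_disjoint_on _).2 fun j k hjk => Set.disjoint_left.2 fun ξ' h1 h2 => ?_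
    have e1 := (x1_mem_of_mem_shellBox hn h1).2
    have e2 := (x1_mem_of_mem_shellBox hn h2).1
    have : 2 * r k ≤ r j := by
      calc 2 * r k = x1 ξ / 2 ^ k := by simp only [hr]; field_simp; ring
        _ ≤ x1 ξ / 2 ^ (j + 1) := by
          gcongr
          · norm_num
          · exact hjk
    linarith
  have hsub : (⋃ k, Hmul (Hinv ξ) ⁻¹' shellBox n (r k)) ⊆
      {ξ' ∈ halfSpace n | x1 ξ' ≤ x1 ξ} := by
    refine Set.iUnion_subset fun k ξ' h => ?_
    have e := x1_mem_of_mem_shellBox hn h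
    rw [x1_Hmul_Hinv] at e
    have : 2 * r k ≤ x1 ξ := by
      calc 2 * r k = x1 ξ / 2 ^ k := by simp only [hr]; field_simp; ring
        _ ≤ x1 ξ := div_le_self hh.le (one_le_pow₀ (by norm_num))
    refine ⟨show 0 < x1 ξ' by linarith [e.1], by linarith [e.2, hr0 k]⟩
  calc ENNReal.ofReal (M ^ (-(hQ n + p)) * 2 ^ (-p) / p / (1 - s) * x1 ξ ^ (p - s * p))
      ≤ ENNReal.ofReal (∑' k, M ^ (-(hQ n + p)) * r k ^ (p - s * p)) := by
        refine ENNReal.ofReal_le_ofReal ?_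
        rw [tsum_mul_left]
        refine le_trans ?_ (mul_le_mul_of_nonneg_left hle (by positivity))
        have h2 : (2 : ℝ) ^ (-p) ≤ 2 ^ (-(p - s * p)) := by
          gcongr
          · norm_num
          · nlinarith
        calc M ^ (-(hQ n + p)) * 2 ^ (-p) / p / (1 - s) * x1 ξ ^ (p - s * p)
            = M ^ (-(hQ n + p)) * (2 ^ (-p) * x1 ξ ^ (p - s * p) / (p - s * p)) := by
              rw [show p - s * p = p * (1 - s) by ring]
              field_simp
          _ ≤ _ := by gcongr
    _ = ∑' k, ENNReal.ofReal (M ^ (-(hQ n + p)) * r k ^ (p - s * p)) :=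
        ENNReal.ofReal_tsum_of_nonneg
          (fun k => mul_nonneg (by positivity) (Real.rpow_nonneg (hr0 k).le _)) (hsum.mul_left _)
    _ ≤ ∑' k, ∫⁻ ξ' in Hmul (Hinv ξ) ⁻¹' shellBox n (r k),
          ENNReal.ofReal (|x1 ξ - x1 ξ'| ^ p / hd (Hmul (Hinv ξ) ξ') ^ (hQ n + s * p)) :=
        ENNReal.tsum_le_tsum fun k => shell_lower_bound hn hp hs0 hs1 (hr0 k) ξ
    _ = ∫⁻ ξ' in ⋃ k, Hmul (Hinv ξ) ⁻¹' shellBox n (r k),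
          ENNReal.ofReal (|x1 ξ - x1 ξ'| ^ p / hd (Hmul (Hinv ξ) ξ') ^ (hQ n + s * p)) :=
        (lintegral_iUnion hmeas hdisj _).symm
    _ ≤ _ := lintegral_mono_set hsub
end
end
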